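/- Let A not be K-trivial, P a Π⁰₁ class, τ a finite string, and Q a Π⁰₁(A) class containing only A-random sequences, with d(τ, P ∩ Q) ≥ δ > 0. Then there exists an (A ⊕ ∅′)-computable infinite prefix-free sequence of strings ⟨ρ_i⟩ such that each ρ_i extends τ, ρ_i ∉ Q, and d(ρ_i, P) ≥ δ/2. -/

import Mathlib

open MeasureTheory ENNReal

/-! ### Cantor space and the uniform (coin-flipping) measure -/

/-- The binary digits of a real number in `[0,1)`, giving a point of Cantor space. -/
noncomputable def binaryDigits (x : ℝ) : ℕ → Bool :=
  fun n => decide (⌊x * 2 ^ (n + 1)⌋ % 2 = 1)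

/-- The uniform (Lebesgue / coin-flipping) measure on Cantor space `2^ω`,
obtained as the pushforward of Lebesgue measure on `[0,1)` under binary expansion. -/
noncomputable def μCantor : Measure (ℕ → Bool) :=
  Measure.map binaryDigits (volume.restrict (Set.Ico (0 : ℝ) 1))

/-- `σ` is an initial segment of the infinite sequence `X`. -/
def IsPrefixOf (σ : List Bool) (X : ℕ → Bool) : Prop :=
  ∀ i : Fin σ.length, X i = σ.get i

/-- The cylinder determined by a finite binary string. -/
def cylinder (σ : List Bool) : Set (ℕ → Bool) := {X | IsPrefixOf σ X}

/-- The open set generated by a set of finite binary strings. -/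
def openOf (S : Set (List Bool)) : Set (ℕ → Bool) := ⋃ σ ∈ S, cylinder σ

/-- The density of a set `P` above the string `τ`: `μ([τ] ∩ P) · 2^{|τ|}`. -/
noncomputable def dens (τ : List Bool) (P : Set (ℕ → Bool)) : ℝ≥0∞ :=
  μCantor (cylinder τ ∩ P) * 2 ^ τ.length

/-- The length-`n` initial segment of `X`, as a finite binary string. -/
def strPrefix (X : ℕ → Bool) (n : ℕ) : List Bool := (List.range n).map X

/-- A set of strings is prefix-free if no element is a proper prefix of another. -/
def PrefixFreeSet (S : Set (List Bool)) : Prop :=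
  ∀ σ ∈ S, ∀ τ ∈ S, σ <+: τ → σ = τ

/-- The weight `∑_{σ ∈ S} 2^{-|σ|}` of a set of strings. -/
noncomputable def weight (S : Set (List Bool)) : ℝ≥0∞ :=
  ∑' σ : S, 2⁻¹ ^ (σ : List Bool).length

/-- A set of strings is bounded if its weight is finite. -/
def BoundedStr (S : Set (List Bool)) : Prop := weight S < ⊤

/-- The tail `X(·+k)` of an infinite binary sequence. -/
def tailSeq (X : ℕ → Bool) (k : ℕ) : ℕ → Bool := fun n => X (n + k)

/-! ### Oracle computability -/

/-- The `e`-th computably enumerable set of naturals (the domain of the `e`-th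
partial computable function). -/
def WEnum (e n : ℕ) : Prop := ((Denumerable.ofNat Nat.Partrec.Code e).eval n).Dom

/-- `OracleComputes e X n m` holds if the `e`-th Turing functional with oracle `X`
outputs `m` on input `n`; a Turing functional is presented by the c.e. set `W_e`
of coded axioms `(σ, n, m)`, and `Γ_e^X(n) = m` iff some initial segment `σ` of `X`
has `(σ, n, m) ∈ W_e`. -/
def OracleComputes (e : ℕ) (X : ℕ → Bool) (n m : ℕ) : Prop :=
  ∃ σ : List Bool, IsPrefixOf σ X ∧
    WEnum e (Nat.pair (Encodable.encode σ) (Nat.pair n m))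

def natOfBool (b : Bool) : ℕ := cond b 1 0

/-- `f : ℕ → ℕ` is computable with oracle `A`: some Turing functional with oracle `A`
has graph exactly `f`. -/
def FnComputableIn (f : ℕ → ℕ) (A : ℕ → Bool) : Prop :=
  ∃ e, ∀ n m, OracleComputes e A n m ↔ m = f n

/-- Turing reducibility `B ≤_T A` for subsets of `ω` (as elements of Cantor space). -/
def TuringLE (B A : ℕ → Bool) : Prop := FnComputableIn (fun n => natOfBool (B n)) A

/-- Turing equivalence. -/
def TuringEquiv (A B : ℕ → Bool) : Prop := TuringLE A B ∧ TuringLE B A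

/-- The Turing join `A ⊕ B`. -/
def joinSet (A B : ℕ → Bool) : ℕ → Bool :=
  fun n => if n % 2 = 0 then A (n / 2) else B (n / 2)

open Classical in
/-- The Turing jump `A′ = {e : Γ_e^A(e)↓}`. -/
noncomputable def jump (A : ℕ → Bool) : ℕ → Bool :=
  fun e => decide (∃ m, OracleComputes e A e m)

/-- The empty oracle. -/
def emptyOracle : ℕ → Bool := fun _ => false

/-- The halting problem `∅′`. -/
noncomputable def zeroJump : ℕ → Bool := jump emptyOracle

/-- A set is computable iff it is Turing reducible to the empty oracle. -/
def ComputableSet (A : ℕ → Bool) : Prop := TuringLE A emptyOracle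

/-- A set of naturals is c.e. in `A`. -/
def CeIn (A : ℕ → Bool) (S : Set ℕ) : Prop :=
  ∃ e, ∀ n, n ∈ S ↔ ∃ m, OracleComputes e A n m

/-- A set of strings is c.e. in `A`. -/
def CeStrIn (A : ℕ → Bool) (S : Set (List Bool)) : Prop :=
  ∃ e, ∀ σ : List Bool, σ ∈ S ↔ ∃ m, OracleComputes e A (Encodable.encode σ) m

/-- A c.e. set of strings. -/
def CeStr (S : Set (List Bool)) : Prop := CeStrIn emptyOracle S

/-! ### Π⁰₁ classes, Martin-Löf randomness, K-triviality -/

/-- A `Π⁰₁(A)` class: the complement of the union of cylinders over an `A`-c.e.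
set of strings. -/
def Pi01In (A : ℕ → Bool) (P : Set (ℕ → Bool)) : Prop :=
  ∃ S : Set (List Bool), CeStrIn A S ∧ P = (openOf S)ᶜ

/-- A `Π⁰₁` class. -/
def Pi01 (P : Set (ℕ → Bool)) : Prop := Pi01In emptyOracle P

/-- The `n`-th level of the `e`-th `A`-effective sequence of open sets. -/
def testLevel (e : ℕ) (A : ℕ → Bool) (n : ℕ) : Set (ℕ → Bool) :=
  openOf {σ | ∃ m, OracleComputes e A (Nat.pair n (Encodable.encode σ)) m}

/-- A Martin-Löf test relative to `A`: a uniformly `A`-c.e. sequence of open sets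
`G n` with `μ(G n) ≤ 2^{-n}`. -/
def MLTestIn (A : ℕ → Bool) (G : ℕ → Set (ℕ → Bool)) : Prop :=
  (∃ e, ∀ n, G n = testLevel e A n) ∧ ∀ n, μCantor (G n) ≤ 2⁻¹ ^ n

/-- `X` is Martin-Löf random relative to `A`: it passes every `A`-Martin-Löf test. -/
def MLRandomIn (A X : ℕ → Bool) : Prop :=
  ∀ G : ℕ → Set (ℕ → Bool), MLTestIn A G → ∃ n, X ∉ G n

/-- `X` is Martin-Löf random. -/
def MLRandom (X : ℕ → Bool) : Prop := MLRandomIn emptyOracle X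

/-- The domain of the `e`-th machine, viewed as a set of binary strings. -/
def machineDom (e : ℕ) : Set (List Bool) :=
  {σ | ((Denumerable.ofNat Nat.Partrec.Code e).eval (Encodable.encode σ)).Dom}

/-- The `e`-th machine is prefix-free. -/
def PrefixFreeMachine (e : ℕ) : Prop := PrefixFreeSet (machineDom e)

/-- Prefix-free Kolmogorov complexity (defined, up to an additive constant, as the
least `|σ| + 2e + 2` over prefix-free machines `e` and programs `σ` producing `x`). -/
noncomputable def Kcpx (x : ℕ) : ℕ :=
  sInf {k | ∃ e, ∃ σ : List Bool, PrefixFreeMachine e ∧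
    x ∈ (Denumerable.ofNat Nat.Partrec.Code e).eval (Encodable.encode σ) ∧
    k = σ.length + 2 * e + 2}

/-- `K(n)` means `K(1^n)`. -/
noncomputable def KofNat (n : ℕ) : ℕ := Kcpx (Encodable.encode (List.replicate n true))

/-- `A` is K-trivial: `K(A↾n) ≤ K(n) + c` for some constant `c`. -/
def KTrivial (A : ℕ → Bool) : Prop :=
  ∃ c, ∀ n, Kcpx (Encodable.encode (strPrefix A n)) ≤ KofNat n + c

/-!
A `Π⁰₁` class `C` of positive measure all of whose members are `A`-random forces `A` to be
`K`-trivial. To each claim that a program `σ` describes the length of a string `ξ` attach an event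
of measure about `2 ^ (-|σ|)`, all these events being independent. The events of the correct claims
about initial segments of `A` form a Martin-Löf test relative to `A`, so by the Baire category
theorem some level of the test is null on a part `R` of `C` of positive measure. That an event has
very small measure on `R` is a c.e. condition, and independence keeps the total measure of the
events satisfying it finite. The Kraft–Chaitin theorem therefore describes all the strings `ξ`
concerned, among them every initial segment of `A`, at constant extra cost.

Let now `r` be smaller than the density of `P ∩ Q` above `τ`. Above `τ`, remove from `P` the
cylinders of all strings of density below `r`. What is left is a `Π⁰₁` class of positive measure, so
it has a member `X` that is not `A`-random. Then `X` lies outside `Q`, and every initial segment of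
`X` extending `τ` has density at least `r`. Strings found earlier can be removed from `P` first:
they are disjoint from `Q`, so the density of `P ∩ Q` does not change. Hence the search for a
further suitable string, incomparable with the earlier ones, never fails, and suitability is c.e. in
`A ⊕ ∅′`.
-/

/-! ### Strings, cylinders and the topology of Cantor space -/

lemma length_strPrefix (X : ℕ → Bool) (n : ℕ) : (strPrefix X n).length = n := by
  simp [strPrefix]

lemma getElem?_strPrefix (X : ℕ → Bool) {m n : ℕ} (h : m < n) :
    (strPrefix X n)[m]? = some (X m) := by
  simp [strPrefix, h]

lemma take_strPrefix (X : ℕ → Bool) {m n : ℕ} (h : m ≤ n) :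
    (strPrefix X n).take m = strPrefix X m := by
  simp [strPrefix, ← List.map_take, List.take_range, h]

lemma strPrefix_prefix_strPrefix (X : ℕ → Bool) {m n : ℕ} (h : m ≤ n) :
    strPrefix X m <+: strPrefix X n :=
  take_strPrefix X h ▸ List.take_prefix _ _

lemma isPrefixOf_iff_strPrefix_eq {σ : List Bool} {X : ℕ → Bool} :
    IsPrefixOf σ X ↔ strPrefix X σ.length = σ := by
  simp [List.ext_get_iff, IsPrefixOf, strPrefix, Fin.forall_iff]

lemma isPrefixOf_strPrefix (X : ℕ → Bool) (n : ℕ) : IsPrefixOf (strPrefix X n) X := by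
  rw [isPrefixOf_iff_strPrefix_eq, length_strPrefix]

lemma IsPrefixOf.prefix_of_length_le {σ τ : List Bool} {X : ℕ → Bool} (hσ : IsPrefixOf σ X)
    (hτ : IsPrefixOf τ X) (h : σ.length ≤ τ.length) : σ <+: τ := by
  rw [isPrefixOf_iff_strPrefix_eq] at hσ hτ
  rw [← hσ, ← hτ]
  exact strPrefix_prefix_strPrefix X h

lemma IsPrefixOf.prefix_or_prefix {σ τ : List Bool} {X : ℕ → Bool} (hσ : IsPrefixOf σ X)
    (hτ : IsPrefixOf τ X) : σ <+: τ ∨ τ <+: σ :=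
  (le_total σ.length τ.length).imp (hσ.prefix_of_length_le hτ) (hτ.prefix_of_length_le hσ)

lemma IsPrefixOf.of_prefix {σ τ : List Bool} {X : ℕ → Bool} (hτ : IsPrefixOf τ X)
    (h : σ <+: τ) : IsPrefixOf σ X := by
  obtain ⟨υ, rfl⟩ := h
  rw [isPrefixOf_iff_strPrefix_eq] at hτ ⊢
  rw [← take_strPrefix X (n := (σ ++ υ).length) (by simp), hτ, List.take_left]

lemma isPrefixOf_concat_iff {σ : List Bool} {b : Bool} {X : ℕ → Bool} :
    IsPrefixOf (σ ++ [b]) X ↔ IsPrefixOf σ X ∧ X σ.length = b := by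
  simp [isPrefixOf_iff_strPrefix_eq, strPrefix, List.range_succ]

lemma cylinder_subset_cylinder {σ τ : List Bool} (h : σ <+: τ) :
    cylinder τ ⊆ cylinder σ :=
  fun _ hX => IsPrefixOf.of_prefix hX h

lemma disjoint_cylinder {σ τ : List Bool} (h : ¬ σ <+: τ) (h' : ¬ τ <+: σ) :
    Disjoint (cylinder σ) (cylinder τ) :=
  Set.disjoint_left.2 fun _ hσ hτ => (IsPrefixOf.prefix_or_prefix hσ hτ).elim h h'

lemma mem_openOf {S : Set (List Bool)} {X : ℕ → Bool} :
    X ∈ openOf S ↔ ∃ σ ∈ S, IsPrefixOf σ X := by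
  simp [openOf, _root_.cylinder]

lemma isClopen_cylinder (σ : List Bool) : IsClopen (cylinder σ) := by
  have h : cylinder σ = ⋂ i : Fin σ.length, (fun X : ℕ → Bool => X i) ⁻¹' {σ.get i} := by
    ext X
    simp [_root_.cylinder, IsPrefixOf]
  rw [h]
  exact isClopen_iInter_of_finite fun i => (isClopen_discrete _).preimage (continuous_apply _)

lemma isOpen_openOf (S : Set (List Bool)) : IsOpen (openOf S) :=
  isOpen_biUnion fun σ _ => (isClopen_cylinder σ).isOpen

lemma cylinder_strPrefix (X : ℕ → Bool) (n : ℕ) :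
    cylinder (strPrefix X n) = PiNat.cylinder X n := by
  ext Y
  simp [_root_.cylinder, IsPrefixOf, PiNat.cylinder, strPrefix, Fin.forall_iff]

lemma isTopologicalBasis_range_cylinder :
    TopologicalSpace.IsTopologicalBasis (Set.range _root_.cylinder) := by
  refine (PiNat.isTopologicalBasis_cylinders fun _ => Bool).of_isOpen_of_subset ?_ ?_
  · rintro _ ⟨σ, rfl⟩
    exact (isClopen_cylinder σ).isOpen
  · rintro _ ⟨X, n, rfl⟩
    exact ⟨_, cylinder_strPrefix X n⟩

/-! ### Dyadic intervals and the uniform measure -/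

/-- The natural number with binary expansion `σ`, most significant digit first. -/
def bval (σ : List Bool) : ℕ := σ.foldl (fun k b => 2 * k + natOfBool b) 0

lemma bval_concat (σ : List Bool) (b : Bool) : bval (σ ++ [b]) = 2 * bval σ + natOfBool b := by
  simp [bval]

lemma bval_lt (σ : List Bool) : bval σ < 2 ^ σ.length := by
  induction σ using List.reverseRecOn with
  | nil => simp [bval]
  | append_singleton σ b ih =>
    have hb : natOfBool b ≤ 1 := by cases b <;> simp [natOfBool]
    rw [bval_concat, List.length_append, List.length_singleton, pow_succ]
    lia

/-- The string of the last `n` binary digits of `k`, most significant digit first. -/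
def bitsOf (k n : ℕ) : List Bool :=
  (List.range n).map fun i => decide (k / 2 ^ (n - 1 - i) % 2 = 1)

lemma length_bitsOf (k n : ℕ) : (bitsOf k n).length = n := by simp [bitsOf]

lemma bitsOf_succ (k n : ℕ) : bitsOf k (n + 1) = bitsOf (k / 2) n ++ [decide (k % 2 = 1)] := by
  simp only [bitsOf, List.range_succ, List.map_append, List.map_cons, List.map_nil]
  congr 1
  · refine List.map_congr_left fun i hi => ?_
    have h : n + 1 - 1 - i = n - 1 - i + 1 := by have := List.mem_range.1 hi; lia
    rw [h, pow_succ', Nat.div_div_eq_div_mul]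
  · simp

lemma bval_bitsOf {k n : ℕ} (h : k < 2 ^ n) : bval (bitsOf k n) = k := by
  induction n generalizing k with
  | zero => simp_all [bitsOf, bval]
  | succ n ih =>
    rw [bitsOf_succ, bval_concat, ih (by rw [pow_succ] at h; lia)]
    rcases Nat.mod_two_eq_zero_or_one k with h | h <;> simp [h, natOfBool] <;> lia

lemma bitsOf_bval (σ : List Bool) : bitsOf (bval σ) σ.length = σ := by
  induction σ using List.reverseRecOn with
  | nil => rfl
  | append_singleton σ b ih =>
    have h : (2 * bval σ + natOfBool b) / 2 = bval σ := by
      cases b <;> simp [natOfBool]; lia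
    rw [bval_concat, List.length_append, List.length_singleton, bitsOf_succ, h, ih]
    cases b <;> simp [natOfBool]

/-- The interval of the reals in `[0, 1)` whose binary expansion extends `σ`. -/
def dyadicInterval (σ : List Bool) : Set ℝ :=
  Set.Ico (bval σ / 2 ^ σ.length : ℝ) ((bval σ + 1) / 2 ^ σ.length)

lemma mem_dyadicInterval_iff {σ : List Bool} {x : ℝ} :
    x ∈ dyadicInterval σ ↔ ⌊x * 2 ^ σ.length⌋ = (bval σ : ℤ) := by
  have h : (0 : ℝ) < 2 ^ σ.length := by positivity
  rw [Int.floor_eq_iff, dyadicInterval, Set.mem_Ico, div_le_iff₀ h, lt_div_iff₀ h, Int.cast_natCast]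

lemma dyadicInterval_nil : dyadicInterval [] = Set.Ico 0 1 := by simp [dyadicInterval, bval]

lemma mem_dyadicInterval_concat_iff {σ : List Bool} {b : Bool} {x : ℝ} :
    x ∈ dyadicInterval (σ ++ [b]) ↔ x ∈ dyadicInterval σ ∧ binaryDigits x σ.length = b := by
  have h : ⌊x * 2 ^ σ.length⌋ = ⌊x * 2 ^ (σ.length + 1)⌋ / 2 := by
    rw [← Nat.cast_ofNat (R := ℤ), ← Int.floor_div_natCast, pow_succ, ← mul_assoc]
    simp
  simp only [mem_dyadicInterval_iff, bval_concat, List.length_append, List.length_singleton,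
    binaryDigits, h]
  generalize ⌊x * 2 ^ (σ.length + 1)⌋ = z
  cases b <;> simp [natOfBool] <;> lia

lemma dyadicInterval_antitone {σ τ : List Bool} (h : σ <+: τ) :
    dyadicInterval τ ⊆ dyadicInterval σ := by
  obtain ⟨υ, rfl⟩ := h
  induction υ using List.reverseRecOn with
  | nil => simp
  | append_singleton υ b ih =>
    rw [← List.append_assoc]
    exact fun x hx => ih (mem_dyadicInterval_concat_iff.1 hx).1

lemma mem_dyadicInterval_iff_isPrefixOf {σ : List Bool} {x : ℝ} (hx : x ∈ Set.Ico (0 : ℝ) 1) :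
    x ∈ dyadicInterval σ ↔ IsPrefixOf σ (binaryDigits x) := by
  induction σ using List.reverseRecOn with
  | nil => simpa [dyadicInterval_nil, IsPrefixOf] using hx
  | append_singleton σ b ih => rw [mem_dyadicInterval_concat_iff, isPrefixOf_concat_iff, ih]

lemma measurable_binaryDigits : Measurable binaryDigits := by
  refine measurable_pi_iff.2 fun n => ?_
  have h : Measurable fun z : ℤ => decide (z % 2 = 1) := measurable_from_top
  exact h.comp (Int.measurable_floor.comp (measurable_id.mul_const _))

lemma μCantor_cylinder (σ : List Bool) : μCantor (cylinder σ) = 2⁻¹ ^ σ.length := by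
  have hpre : binaryDigits ⁻¹' cylinder σ ∩ Set.Ico (0 : ℝ) 1 = dyadicInterval σ := by
    ext x
    refine ⟨fun ⟨h, hx⟩ => (mem_dyadicInterval_iff_isPrefixOf hx).2 h, fun h => ?_⟩
    have hx : x ∈ Set.Ico (0 : ℝ) 1 :=
      dyadicInterval_nil ▸ dyadicInterval_antitone (List.nil_prefix (l := σ)) h
    exact ⟨(mem_dyadicInterval_iff_isPrefixOf hx).1 h, hx⟩
  have hmeas := (isClopen_cylinder σ).isOpen.measurableSet
  rw [μCantor, Measure.map_apply measurable_binaryDigits hmeas,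
    Measure.restrict_apply (measurable_binaryDigits hmeas), hpre, dyadicInterval, Real.volume_Ico,
    ← sub_div, add_sub_cancel_left, one_div, ← inv_pow, ENNReal.ofReal_pow (by positivity),
    ENNReal.ofReal_inv_of_pos two_pos, ENNReal.ofReal_ofNat]

instance : IsProbabilityMeasure μCantor where
  measure_univ := by
    have h : cylinder [] = Set.univ := by ext; simp [_root_.cylinder, IsPrefixOf]
    rw [← h, μCantor_cylinder, List.length_nil, pow_zero]

/-- The distribution of a fair coin. -/
noncomputable def coin : Measure Bool := (PMF.uniformOfFintype Bool).toMeasure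

instance : IsProbabilityMeasure coin := PMF.toMeasure.isProbabilityMeasure _

lemma coin_singleton (b : Bool) : coin {b} = 2⁻¹ := by
  simp [coin]

lemma infinitePi_coin_pi_singleton (s : Finset ℕ) (g : ℕ → Bool) :
    Measure.infinitePi (fun _ : ℕ => coin) (Set.pi s fun i => {g i}) = 2⁻¹ ^ s.card := by
  rw [Measure.infinitePi_pi _ fun _ _ => .singleton _]
  simp [coin_singleton]

lemma cylinder_eq_pi (σ : List Bool) :
    cylinder σ = Set.pi (Finset.range σ.length) fun i => {σ.getD i false} := by
  ext X
  simp +contextual [_root_.cylinder, IsPrefixOf, Set.mem_pi, Fin.forall_iff]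

lemma isPiSystem_range_cylinder : IsPiSystem (Set.range _root_.cylinder) := by
  rintro _ ⟨σ, rfl⟩ _ ⟨τ, rfl⟩ ⟨X, hσ, hτ⟩
  rcases IsPrefixOf.prefix_or_prefix hσ hτ with h | h
  · exact ⟨τ, (Set.inter_eq_right.2 (cylinder_subset_cylinder h)).symm⟩
  · exact ⟨σ, (Set.inter_eq_left.2 (cylinder_subset_cylinder h)).symm⟩

lemma μCantor_eq_infinitePi : μCantor = Measure.infinitePi fun _ => coin := by
  refine ext_of_generate_finite _ ?_ isPiSystem_range_cylinder ?_ (by simp)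
  · rw [← isTopologicalBasis_range_cylinder.borel_eq_generateFrom]
    exact BorelSpace.measurable_eq
  · rintro _ ⟨σ, rfl⟩
    rw [μCantor_cylinder, cylinder_eq_pi, infinitePi_coin_pi_singleton, Finset.card_range]

lemma μCantor_pi_singleton (s : Finset ℕ) (g : ℕ → Bool) :
    μCantor (Set.pi s fun i => {g i}) = 2⁻¹ ^ s.card := by
  rw [μCantor_eq_infinitePi, infinitePi_coin_pi_singleton]

/-! ### Weights and densities -/

lemma weight_eq_tsum_μCantor (S : Set (List Bool)) :
    weight S = ∑' σ : S, μCantor (cylinder σ) := by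
  simp only [weight, μCantor_cylinder]

lemma PrefixFreeSet.μCantor_openOf_inter {S : Set (List Bool)} (hS : PrefixFreeSet S)
    (P : Set (ℕ → Bool)) : μCantor (openOf S ∩ P) = ∑' σ : S, μCantor (cylinder σ ∩ P) := by
  have hdisj : S.PairwiseDisjoint _root_.cylinder := fun σ hσ τ hτ hne =>
    disjoint_cylinder (fun h => hne (hS σ hσ τ hτ h)) fun h => hne (hS τ hτ σ hσ h).symm
  have hmeas : ∀ σ ∈ S, MeasurableSet (cylinder σ) := fun σ _ =>
    (isClopen_cylinder σ).isOpen.measurableSet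
  rw [← Measure.restrict_apply (isOpen_openOf S).measurableSet, openOf,
    measure_biUnion S.to_countable hdisj hmeas]
  exact tsum_congr fun σ => Measure.restrict_apply (hmeas σ σ.2)

lemma PrefixFreeSet.weight_eq {S : Set (List Bool)} (hS : PrefixFreeSet S) :
    weight S = μCantor (openOf S) := by
  simpa [weight_eq_tsum_μCantor] using (hS.μCantor_openOf_inter Set.univ).symm

lemma PrefixFreeSet.weight_le_one {S : Set (List Bool)} (hS : PrefixFreeSet S) : weight S ≤ 1 :=
  hS.weight_eq.trans_le prob_le_one

lemma exists_prefixFreeSet_subset_openOf_eq (S : Set (List Bool)) :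
    ∃ M ⊆ S, PrefixFreeSet M ∧ openOf M = openOf S := by
  refine ⟨{σ ∈ S | ∀ υ ∈ S, υ <+: σ → υ = σ}, fun σ hσ => hσ.1,
    fun σ hσ τ hτ h => hτ.2 σ hσ.1 h, ?_⟩
  ext X
  simp only [mem_openOf]
  refine ⟨fun ⟨σ, hσ, hX⟩ => ⟨σ, hσ.1, hX⟩, fun ⟨σ, hσ, hX⟩ => ?_⟩
  obtain ⟨υ, ⟨hυ, hυX⟩, hmin⟩ := (measure List.length).wf.has_min
    {υ | υ ∈ S ∧ IsPrefixOf υ X} ⟨σ, hσ, hX⟩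
  refine ⟨υ, ⟨hυ, fun ζ hζ h => h.eq_of_length_le (not_lt.1 ?_)⟩, hυX⟩
  exact hmin ζ ⟨hζ, hυX.of_prefix h⟩

lemma μCantor_cylinder_mul_two_pow (σ : List Bool) :
    μCantor (cylinder σ) * 2 ^ σ.length = 1 := by
  rw [μCantor_cylinder, ← mul_pow, ENNReal.inv_mul_cancel two_ne_zero ofNat_ne_top, one_pow]

lemma dens_mul_μCantor_cylinder (σ : List Bool) (P : Set (ℕ → Bool)) :
    dens σ P * μCantor (cylinder σ) = μCantor (cylinder σ ∩ P) := by
  rw [dens, mul_assoc, mul_comm (_ ^ _), μCantor_cylinder_mul_two_pow, mul_one]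

lemma dens_ne_top (σ : List Bool) (P : Set (ℕ → Bool)) : dens σ P ≠ ⊤ :=
  mul_ne_top (measure_ne_top _ _) (pow_ne_top ofNat_ne_top)

lemma μCantor_openOf_inter_le {S : Set (List Bool)} {P : Set (ℕ → Bool)} {r : ℝ≥0∞}
    (h : ∀ σ ∈ S, dens σ P ≤ r) : μCantor (openOf S ∩ P) ≤ r * μCantor (openOf S) := by
  obtain ⟨M, hMS, hM, hMeq⟩ := exists_prefixFreeSet_subset_openOf_eq S
  rw [← hMeq, hM.μCantor_openOf_inter, ← hM.weight_eq, weight_eq_tsum_μCantor,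
    ← ENNReal.tsum_mul_left]
  refine ENNReal.tsum_le_tsum fun σ => ?_
  rw [← dens_mul_μCantor_cylinder]
  gcongr
  exact h σ (hMS σ.2)

/-! ### Independence and category -/

open ProbabilityTheory in
lemma tsum_measure_lt_top_of_tsum_measure_inter_lt {Ω ι : Type*} [MeasurableSpace Ω] [Countable ι]
    {μ : Measure Ω} {s : ι → Set Ω} (hs : ∀ i, MeasurableSet (s i)) (hind : iIndepSet s μ)
    {R : Set Ω} (h : ∑' i, μ (R ∩ s i) < μ R) : ∑' i, μ (s i) < ⊤ := by
  have := hind.isProbabilityMeasure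
  cases finite_or_infinite ι
  · have := Fintype.ofFinite ι
    rw [tsum_fintype]
    exact ENNReal.sum_lt_top.2 fun i _ => measure_lt_top μ _
  obtain ⟨e⟩ := nonempty_equiv_of_countable (α := ℕ) (β := ι)
  refine lt_top_iff_ne_top.2 fun htop => h.not_ge ?_
  have hlimsup : μ (Filter.limsup (s ∘ e) Filter.atTop) = 1 :=
    measure_limsup_eq_one (fun n => hs (e n)) (hind.precomp e.injective)
      ((e.tsum_eq fun i => μ (s i)).trans htop)
  have hae : ∀ᵐ x ∂μ, x ∈ ⋃ i, s i := by
    filter_upwards [(mem_ae_iff_prob_eq_one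
      (MeasurableSet.measurableSet_limsup fun n => hs (e n))).2 hlimsup] with x hx
    obtain ⟨n, hn⟩ := (Filter.mem_limsup_iff_frequently_mem.1 hx).exists
    exact Set.mem_iUnion.2 ⟨e n, hn⟩
  calc μ R = μ (R ∩ ⋃ i, s i) := (measure_inter_conull hae).symm
    _ ≤ ∑' i, μ (R ∩ s i) := Set.inter_iUnion R s ▸ measure_iUnion_le _

/-- The event that a sequence begins its `i`-th column with `w` ones; blocks in different columns
are independent. -/
def block (i w : ℕ) : Set (ℕ → Bool) := {X | ∀ j < w, X (Nat.pair i j) = true}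

lemma mem_block_iff_exists_isPrefixOf {i w : ℕ} {X : ℕ → Bool} :
    X ∈ block i w ↔ ∃ υ, IsPrefixOf υ X ∧ ∀ k < w, υ[Nat.pair i k]? = some true := by
  constructor
  · intro hX
    refine ⟨strPrefix X (Nat.pair i w), isPrefixOf_strPrefix X _, fun k hk => ?_⟩
    rw [getElem?_strPrefix X (Nat.pair_lt_pair_right i hk), hX k hk]
  · rintro ⟨υ, hυ, h⟩ k hk
    obtain ⟨hlt, hget⟩ := List.getElem?_eq_some_iff.1 (h k hk)
    exact (hυ ⟨_, hlt⟩).trans hget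

lemma iInter_block_eq_pi (s : Finset ℕ) (w : ℕ → ℕ) :
    ⋂ i ∈ s, block i (w i) =
      Set.pi (((s.sigma fun i => Finset.range (w i)).image fun p => Nat.pair p.1 p.2 : Finset ℕ))
        fun _ => {true} := by
  ext X
  simp only [block, Set.mem_iInter, Set.mem_ofPred_eq, Set.mem_pi, Set.mem_singleton_iff,
    Finset.coe_image, Set.forall_mem_image, Finset.mem_coe, Finset.mem_sigma, Finset.mem_range]
  exact ⟨fun h p hp => h _ hp.1 _ hp.2, fun h i hi j hj => h (x := ⟨i, j⟩) ⟨hi, hj⟩⟩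

lemma μCantor_iInter_block (s : Finset ℕ) (w : ℕ → ℕ) :
    μCantor (⋂ i ∈ s, block i (w i)) = ∏ i ∈ s, 2⁻¹ ^ w i := by
  rw [iInter_block_eq_pi, μCantor_pi_singleton, Finset.card_image_of_injOn, Finset.card_sigma,
    Finset.prod_pow_eq_pow_sum]
  · simp
  · rintro ⟨i, j⟩ _ ⟨i', j'⟩ _ h
    obtain ⟨rfl, rfl⟩ := Nat.pair_eq_pair.1 h
    rfl

lemma μCantor_block (i w : ℕ) : μCantor (block i w) = 2⁻¹ ^ w := by
  simpa using μCantor_iInter_block {i} fun _ => w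

lemma isClopen_block (i w : ℕ) : IsClopen (block i w) := by
  have h : block i w = ⋂ j ∈ Finset.range w, (fun X : ℕ → Bool => X (Nat.pair i j)) ⁻¹' {true} := by
    ext X
    simp [block]
  rw [h]
  exact isClopen_biInter_finset fun j _ => (isClopen_discrete _).preimage (continuous_apply _)

lemma iIndepSet_block {ι : Type*} {f : ι → ℕ} (hf : f.Injective) (w : ι → ℕ) :
    ProbabilityTheory.iIndepSet (fun i => block (f i) (w i)) μCantor := by
  have h (w : ℕ → ℕ) : ProbabilityTheory.iIndepSet (fun i => block i (w i)) μCantor := by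
    rw [ProbabilityTheory.iIndepSet_iff_meas_biInter
      fun i => (isClopen_block i _).isOpen.measurableSet]
    intro s
    simp only [μCantor_iInter_block, μCantor_block]
  simpa only [Function.comp_def, hf.extend_apply] using (h (Function.extend f w 0)).precomp hf

lemma exists_mem_basis_measure_inter_eq_zero {X : Type*} [TopologicalSpace X] [CompactSpace X]
    [T2Space X] [SecondCountableTopology X] [MeasurableSpace X] [OpensMeasurableSpace X]
    {μ : Measure X} {R : Set X} (hR : IsClosed R) (hμ : 0 < μ R) {G : ℕ → Set X}
    (hG : ∀ c, IsOpen (G c)) (h : R ∩ ⋂ c, G c = ∅) {B : Set (Set X)}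
    (hB : TopologicalSpace.IsTopologicalBasis B) :
    ∃ U ∈ B, 0 < μ (R ∩ U) ∧ ∃ c, μ (R ∩ U ∩ G c) = 0 := by
  set K := (μ.restrict R).support
  have hKR : K ⊆ R := hR.closure_eq ▸ Measure.support_restrict_subset.trans Set.inter_subset_left
  have : CompactSpace K := isCompact_iff_compactSpace.1 Measure.isClosed_support.isCompact
  have : Nonempty K :=
    (Measure.nonempty_support fun h0 => hμ.ne' (Measure.restrict_eq_zero.1 h0)).to_subtype
  have hnd : ∃ c, ¬ Dense (Subtype.val ⁻¹' G c : Set K) := by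
    by_contra! hd
    obtain ⟨x, hx⟩ :=
      (dense_iInter_of_isOpen_nat (fun c => (hG c).preimage continuous_subtype_val) hd).nonempty
    refine Set.notMem_empty (x : X) (h ▸ ⟨hKR x.2, ?_⟩)
    simpa using hx
  obtain ⟨c, hc⟩ := hnd
  simp only [dense_iff_inter_open, not_forall, Set.not_nonempty_iff_eq_empty] at hc
  obtain ⟨_, ⟨V, hV, rfl⟩, ⟨x, hxV⟩, hempty⟩ := hc
  obtain ⟨U, hUB, hxU, hUV⟩ := hB.exists_subset_of_mem_open hxV hV
  have hU := hB.isOpen hUB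
  refine ⟨U, hUB, ?_, c, ?_⟩
  · rw [Set.inter_comm, ← Measure.restrict_apply hU.measurableSet]
    exact (Measure.mem_support_iff_forall _).1 x.2 U (hU.mem_nhds hxU)
  · rw [Set.inter_assoc, Set.inter_comm, ← Measure.restrict_apply (hU.inter (hG c)).measurableSet]
    have hsub : U ∩ G c ⊆ Kᶜ := fun y hy hyK =>
      Set.notMem_empty (⟨y, hyK⟩ : K) (hempty ▸ ⟨hUV hy.1, hy.2⟩)
    exact measure_mono_null hsub Measure.measure_compl_support

/-! ### Primitive recursive and recursively enumerable predicates -/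

section Primrec

variable {α β γ : Type*} [Primcodable α] [Primcodable β] [Primcodable γ]

attribute [fun_prop] Primrec PrimrecPred REPred

attribute [fun_prop] Primrec.id Primrec.const Primrec.comp Primrec.fst Primrec.snd Primrec.pair
  Primrec.encode Primrec.decode Primrec.unpair Primrec.ofNat Primrec.list_range
  Primrec.list_length Primrec.option_some Primrec.option_isSome Primrec.ite PrimrecPred.comp
  PrimrecPred.and PrimrecPred.or PrimrecPred.not

@[fun_prop]
lemma primrec_natPair : Primrec fun x : ℕ × ℕ => Nat.pair x.1 x.2 := Primrec₂.natPair

@[fun_prop]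
lemma primrec_add : Primrec fun x : ℕ × ℕ => x.1 + x.2 := Primrec.nat_add

@[fun_prop]
lemma primrec_sub : Primrec fun x : ℕ × ℕ => x.1 - x.2 := Primrec.nat_sub

@[fun_prop]
lemma primrec_mul : Primrec fun x : ℕ × ℕ => x.1 * x.2 := Primrec.nat_mul

@[fun_prop]
lemma primrec_div : Primrec fun x : ℕ × ℕ => x.1 / x.2 := Primrec.nat_div

@[fun_prop]
lemma primrec_mod : Primrec fun x : ℕ × ℕ => x.1 % x.2 := Primrec.nat_mod

@[fun_prop]
lemma primrec_pow : Primrec fun x : ℕ × ℕ => x.1 ^ x.2 := Primrec₂.unpaired'.1 Nat.Primrec.pow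

@[fun_prop]
lemma primrec_take : Primrec fun x : ℕ × List α => x.2.take x.1 := Primrec.list_take

@[fun_prop]
lemma primrec_getElem? : Primrec fun x : List α × ℕ => x.1[x.2]? := Primrec.list_getElem?

@[fun_prop]
lemma primrec_evaln {f h : α → ℕ} {g : α → Nat.Partrec.Code} (hf : Primrec f) (hg : Primrec g)
    (hh : Primrec h) : Primrec fun a => (g a).evaln (f a) (h a) :=
  Nat.Partrec.Code.primrec_evaln.comp ((hf.pair hg).pair hh)

@[fun_prop]
lemma primrec_decide {p : α → Prop} [DecidablePred p] (hp : PrimrecPred p) :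
    Primrec fun a => decide (p a) :=
  hp.decide

@[fun_prop]
lemma primrec_option_bind {f : α → Option β} {g : α → β → Option γ} (hf : Primrec f)
    (hg : Primrec fun x : α × β => g x.1 x.2) : Primrec fun a => (f a).bind (g a) :=
  Primrec.option_bind hf hg

@[fun_prop]
lemma primrec_list_map {f : α → List β} {g : α → β → γ} (hf : Primrec f)
    (hg : Primrec fun x : α × β => g x.1 x.2) : Primrec fun a => (f a).map (g a) :=
  Primrec.list_map hf hg

@[fun_prop]
lemma primrec_list_filterMap {f : α → List β} {g : α → β → Option γ} (hf : Primrec f)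
    (hg : Primrec fun x : α × β => g x.1 x.2) : Primrec fun a => (f a).filterMap (g a) :=
  Primrec.listFilterMap hf hg

@[fun_prop]
lemma primrec_list_filter {f : α → List β} {p : α → β → Prop} [∀ a, DecidablePred (p a)]
    (hf : Primrec f) (hp : PrimrecPred fun x : α × β => p x.1 x.2) :
    Primrec fun a => (f a).filter (p a ·) := by
  simp only [← List.filterMap_eq_filter]
  unfold Option.guard
  simp only [decide_eq_true_eq]
  fun_prop

@[fun_prop]
lemma primrecPred_eq : PrimrecPred fun x : α × α => x.1 = x.2 := Primrec.eq

@[fun_prop]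
lemma primrecPred_lt : PrimrecPred fun x : ℕ × ℕ => x.1 < x.2 := Primrec.nat_lt

@[fun_prop]
lemma primrecPred_exists_mem {f : α → List β} {p : α → β → Prop} (hf : Primrec f)
    (hp : PrimrecPred fun x : α × β => p x.1 x.2) : PrimrecPred fun a => ∃ b ∈ f a, p a b := by
  have h : PrimrecRel fun (b : β) (a : α) => p a b := hp.comp (Primrec.snd.pair Primrec.fst)
  exact PrimrecRel.comp h.exists_mem_list hf Primrec.id

@[fun_prop]
lemma primrecPred_forall_mem {f : α → List β} {p : α → β → Prop} (hf : Primrec f)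
    (hp : PrimrecPred fun x : α × β => p x.1 x.2) : PrimrecPred fun a => ∀ b ∈ f a, p a b := by
  have h : PrimrecRel fun (b : β) (a : α) => p a b := hp.comp (Primrec.snd.pair Primrec.fst)
  exact PrimrecRel.comp h.forall_mem_list hf Primrec.id

@[fun_prop]
lemma primrecPred_exists_lt {f : α → ℕ} {p : α → ℕ → Prop} (hf : Primrec f)
    (hp : PrimrecPred fun x : α × ℕ => p x.1 x.2) : PrimrecPred fun a => ∃ n < f a, p a n := by
  have h : PrimrecPred fun a => ∃ n ∈ List.range (f a), p a n := by fun_prop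
  simpa using h

@[fun_prop]
lemma primrecPred_forall_lt {f : α → ℕ} {p : α → ℕ → Prop} (hf : Primrec f)
    (hp : PrimrecPred fun x : α × ℕ => p x.1 x.2) : PrimrecPred fun a => ∀ n < f a, p a n := by
  have h : PrimrecPred fun a => ∀ n ∈ List.range (f a), p a n := by fun_prop
  simpa using h

@[fun_prop]
lemma primrecPred_prefix : PrimrecPred fun x : List α × List α => x.1 <+: x.2 := by
  simp_rw [List.prefix_iff_eq_take]
  fun_prop

@[fun_prop]
lemma primrecPred_exists_decode {f : α → ℕ} {p : α → β → Prop} (hf : Primrec f)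
    (hp : PrimrecPred fun x : α × β => p x.1 x.2) :
    PrimrecPred fun a => ∃ b, Encodable.decode (f a) = some b ∧ p a b := by
  classical
  have h : PrimrecPred fun a =>
      (Encodable.decode (α := β) (f a)).bind (fun b => if p a b then some () else none) =
        some () := by
    fun_prop
  refine h.of_eq fun a => ?_
  simp [Option.bind_eq_some_iff]

end Primrec

section REPred

variable {α β : Type*} [Primcodable α] [Primcodable β] {p q : α → Prop}

lemma rePred_iff_exists_code :
    REPred p ↔ ∃ c : Nat.Partrec.Code, ∀ a, (c.eval (Encodable.encode a)).Dom ↔ p a := by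
  constructor
  · intro hp
    obtain ⟨c, hc⟩ := Nat.Partrec.Code.exists_code.1 hp
    exact ⟨c, fun a => by simp [hc, Part.bind_some, Part.assert]⟩
  · rintro ⟨c, hc⟩
    exact (Nat.Partrec.Code.eval_part.comp (Computable.const c) Computable.encode).dom_re.of_eq hc

lemma rePred_iff_exists_primrecPred :
    REPred p ↔ ∃ q : α × ℕ → Prop, PrimrecPred q ∧ ∀ a, p a ↔ ∃ k, q (a, k) := by
  constructor
  · intro hp
    obtain ⟨c, hc⟩ := rePred_iff_exists_code.1 hp
    refine ⟨fun x => (c.evaln x.2 (Encodable.encode x.1)).isSome = true, by fun_prop, fun a => ?_⟩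
    simp only [← hc, Part.dom_iff_mem, Nat.Partrec.Code.evaln_complete, Option.isSome_iff_exists,
      Option.mem_def]
    exact exists_comm
  · rintro ⟨q, ⟨_, hq⟩, hpq⟩
    have h : Partrec fun a => Nat.rfind fun k => Part.some (decide (q (a, k))) :=
      Partrec.rfind (p := fun a k => Part.some (decide (q (a, k)))) hq.to_comp.partrec.to₂
    exact h.dom_re.of_eq fun a => Nat.rfind_dom.trans <| by simp [hpq]

@[fun_prop]
lemma rePred_of_primrecPred (hp : PrimrecPred p) : REPred p :=
  hp.computablePred.to_re

@[fun_prop]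
lemma rePred_comp {p : β → Prop} {f : α → β} (hp : REPred p) (hf : Primrec f) :
    REPred fun a => p (f a) := by
  obtain ⟨r, hr, h⟩ := rePred_iff_exists_primrecPred.1 hp
  exact rePred_iff_exists_primrecPred.2 ⟨fun x => r (f x.1, x.2), by fun_prop, fun a => h _⟩

@[fun_prop]
lemma rePred_exists {p : α → β → Prop} (hp : REPred fun x : α × β => p x.1 x.2) :
    REPred fun a => ∃ b, p a b := by
  obtain ⟨r, hr, h⟩ := rePred_iff_exists_primrecPred.1 hp
  refine rePred_iff_exists_primrecPred.2 ⟨fun x => ∃ b : β × ℕ,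
    Encodable.decode x.2 = some b ∧ r ((x.1, b.1), b.2), by fun_prop, fun a => ?_⟩
  simp only [h (a, _)]
  exact ⟨fun ⟨b, k, hk⟩ => ⟨Encodable.encode (b, k), _, Encodable.encodek _, hk⟩,
    fun ⟨_, b, _, hb⟩ => ⟨b.1, b.2, hb⟩⟩

@[fun_prop]
lemma rePred_and (hp : REPred p) (hq : REPred q) : REPred fun a => p a ∧ q a := by
  obtain ⟨r, hr, h⟩ := rePred_iff_exists_primrecPred.1 hp
  obtain ⟨s, hs, h'⟩ := rePred_iff_exists_primrecPred.1 hq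
  have hrs : PrimrecPred fun x : (α × ℕ) × ℕ => r x.1 ∧ s (x.1.1, x.2) := by fun_prop
  have hrs' : REPred fun a => ∃ k l, r (a, k) ∧ s (a, l) :=
    rePred_exists (rePred_exists (rePred_of_primrecPred hrs))
  exact hrs'.of_eq fun a => by simp [h, h']

@[fun_prop]
lemma rePred_or (hp : REPred p) (hq : REPred q) : REPred fun a => p a ∨ q a := by
  obtain ⟨r, hr, h⟩ := rePred_iff_exists_primrecPred.1 hp
  obtain ⟨s, hs, h'⟩ := rePred_iff_exists_primrecPred.1 hq
  have hrs : PrimrecPred fun x : α × ℕ => r x ∨ s x := by fun_prop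
  have hrs' : REPred fun a => ∃ k, r (a, k) ∨ s (a, k) :=
    rePred_exists (rePred_of_primrecPred hrs)
  exact hrs'.of_eq fun a => by simp [h, h', exists_or]

@[fun_prop]
lemma rePred_wEnum : REPred fun x : ℕ × ℕ => WEnum x.1 x.2 :=
  (Nat.Partrec.Code.eval_part.comp
    ((Primrec.ofNat Nat.Partrec.Code).to_comp.comp Computable.fst) Computable.snd).dom_re

lemma exists_wEnum_iff (hp : REPred p) : ∃ e, ∀ a, WEnum e (Encodable.encode a) ↔ p a := by
  obtain ⟨c, hc⟩ := rePred_iff_exists_code.1 hp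
  exact ⟨Encodable.encode c, fun a => by rw [WEnum, Denumerable.ofNat_encode, hc]⟩

end REPred

/-! ### Relative enumerability -/

section REIn

variable {α β : Type*} [Primcodable α] [Primcodable β] {X : ℕ → Bool} {p q : α → Prop}

/-- `p` is c.e. in the oracle `X`: a c.e. set of axioms `(σ, a)` enumerates exactly the `a` with
`p a` when `σ` ranges over the initial segments of `X`. -/
@[fun_prop]
def REIn (p : α → Prop) (X : ℕ → Bool) : Prop :=
  ∃ q : List Bool × α → Prop, REPred q ∧ ∀ a, p a ↔ ∃ σ, IsPrefixOf σ X ∧ q (σ, a)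

lemma REIn.of_eq (hp : REIn p X) (h : ∀ a, p a ↔ q a) : REIn q X :=
  funext (fun a => propext (h a)) ▸ hp

lemma isPrefixOf_nil (X : ℕ → Bool) : IsPrefixOf [] X := fun i => i.elim0

@[fun_prop]
lemma reIn_of_rePred (hp : REPred p) : REIn p X :=
  ⟨fun x => p x.2, by fun_prop, fun _ => ⟨fun h => ⟨[], isPrefixOf_nil X, h⟩, fun ⟨_, _, h⟩ => h⟩⟩

@[fun_prop]
lemma reIn_of_primrecPred (hp : PrimrecPred p) : REIn p X :=
  reIn_of_rePred (rePred_of_primrecPred hp)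

@[fun_prop]
lemma reIn_comp {p : β → Prop} {f : α → β} (hp : REIn p X) (hf : Primrec f) :
    REIn (fun a => p (f a)) X := by
  obtain ⟨q, hq, h⟩ := hp
  exact ⟨fun x => q (x.1, f x.2), by fun_prop, fun a => h _⟩

@[fun_prop]
lemma reIn_and (hp : REIn p X) (hq : REIn q X) : REIn (fun a => p a ∧ q a) X := by
  obtain ⟨r, hr, h⟩ := hp
  obtain ⟨s, hs, h'⟩ := hq
  refine ⟨fun x => ∃ υ υ', (υ <+: x.1 ∧ υ' <+: x.1) ∧ r (υ, x.2) ∧ s (υ', x.2),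
    by fun_prop, fun a => ?_⟩
  simp only [h, h']
  constructor
  · rintro ⟨⟨υ, hυ, hr⟩, υ', hυ', hs⟩
    rcases hυ.prefix_or_prefix hυ' with hle | hle
    · exact ⟨υ', hυ', υ, υ', ⟨hle, List.prefix_rfl⟩, hr, hs⟩
    · exact ⟨υ, hυ, υ, υ', ⟨List.prefix_rfl, hle⟩, hr, hs⟩
  · rintro ⟨σ, hσ, υ, υ', ⟨hυ, hυ'⟩, hr, hs⟩
    exact ⟨⟨υ, hσ.of_prefix hυ, hr⟩, υ', hσ.of_prefix hυ', hs⟩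

@[fun_prop]
lemma reIn_exists {p : α → β → Prop} (hp : REIn (fun x : α × β => p x.1 x.2) X) :
    REIn (fun a => ∃ b, p a b) X := by
  obtain ⟨q, hq, h⟩ := hp
  refine ⟨fun x => ∃ b, q (x.1, x.2, b), by fun_prop, fun a => ?_⟩
  simp only [h (a, _)]
  exact ⟨fun ⟨b, σ, hσ, hb⟩ => ⟨σ, hσ, b, hb⟩, fun ⟨σ, hσ, b, hb⟩ => ⟨b, σ, hσ, hb⟩⟩

lemma reIn_apply_eq (X : ℕ → Bool) {f : α → ℕ} (hf : Primrec f) (b : Bool) :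
    REIn (fun a => X (f a) = b) X := by
  refine ⟨fun x => x.1[f x.2]? = some b, by fun_prop, fun a => ⟨fun h => ?_, ?_⟩⟩
  · exact ⟨strPrefix X (f a + 1), isPrefixOf_strPrefix X _,
      (getElem?_strPrefix X (Nat.lt_succ_self _)).trans (congrArg some h)⟩
  · rintro ⟨σ, hσ, h⟩
    obtain ⟨hlt, h⟩ := List.getElem?_eq_some_iff.1 h
    exact (hσ ⟨f a, hlt⟩).trans h

lemma isPrefixOf_iff_getElem? {σ : List Bool} {X : ℕ → Bool} :
    IsPrefixOf σ X ↔ ∀ i < σ.length, some (X i) = σ[i]? := by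
  simp +contextual [IsPrefixOf, Fin.forall_iff]

lemma reIn_isPrefixOf_comp (X : ℕ → Bool) {g : ℕ → ℕ} (hg : Primrec g) :
    REIn (fun σ => IsPrefixOf σ (X ∘ g)) X := by
  refine ⟨fun x => ∀ i < x.2.length, x.1[g i]? = x.2[i]? ∧ g i < x.1.length,
    rePred_of_primrecPred (by fun_prop), fun σ => ?_⟩
  simp only [isPrefixOf_iff_getElem? (X := X ∘ g), Function.comp_apply]
  constructor
  · intro h
    have hlt (i) (hi : i < σ.length) : g i < (Finset.range σ.length).sup g + 1 :=
      Nat.lt_succ_of_le (Finset.le_sup (Finset.mem_range.2 hi))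
    refine ⟨_, isPrefixOf_strPrefix X ((Finset.range σ.length).sup g + 1), fun i hi => ⟨?_, ?_⟩⟩
    · rw [getElem?_strPrefix X (hlt i hi), h i hi]
    · exact (hlt i hi).trans_eq (length_strPrefix _ _).symm
  · rintro ⟨υ, hυ, h⟩ i hi
    rw [← (h i hi).1]
    exact isPrefixOf_iff_getElem?.1 hυ _ (h i hi).2

@[fun_prop]
lemma reIn_isPrefixOf (X : ℕ → Bool) : REIn (fun σ => IsPrefixOf σ X) X :=
  reIn_isPrefixOf_comp X Primrec.id

lemma REIn.of_comp {g : ℕ → ℕ} (hg : Primrec g) (hp : REIn p (X ∘ g)) : REIn p X := by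
  obtain ⟨q, hq, h⟩ := hp
  have hpre : REIn (fun a => ∃ σ, IsPrefixOf σ (X ∘ g) ∧ q (σ, a)) X :=
    reIn_exists (reIn_and (reIn_comp (reIn_isPrefixOf_comp X hg) .snd) (by fun_prop))
  exact hpre.of_eq fun a => (h a).symm

lemma REIn.joinSet_left {A : ℕ → Bool} (hp : REIn p A) (B : ℕ → Bool) : REIn p (joinSet A B) :=
  .of_comp (g := fun n => 2 * n) (by fun_prop) (by
    simpa [joinSet, Function.comp_def] using hp)

lemma REIn.joinSet_right {B : ℕ → Bool} (hp : REIn p B) (A : ℕ → Bool) : REIn p (joinSet A B) :=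
  .of_comp (g := fun n => 2 * n + 1) (by fun_prop) (by
    simpa [joinSet, Function.comp_def, Nat.add_mod, Nat.mul_add_div] using hp)

lemma reIn_iff_exists_oracleComputes {p : ℕ × ℕ → Prop} :
    REIn p X ↔ ∃ e, ∀ n m, OracleComputes e X n m ↔ p (n, m) := by
  constructor
  · rintro ⟨q, hq, h⟩
    obtain ⟨e, he⟩ := exists_wEnum_iff hq
    exact ⟨e, fun n m => by simp only [h, OracleComputes, ← he]; rfl⟩
  · rintro ⟨e, he⟩
    exact ⟨fun x => WEnum e (Nat.pair (Encodable.encode x.1) (Nat.pair x.2.1 x.2.2)),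
      by fun_prop, fun x => (he x.1 x.2).symm⟩

lemma reIn_iff_exists_oracleComputes_encode :
    REIn p X ↔ ∃ e, ∀ a, p a ↔ ∃ m, OracleComputes e X (Encodable.encode a) m := by
  constructor
  · intro hp
    have : REIn (fun x : ℕ × ℕ => ∃ a, Encodable.encode a = x.1 ∧ p a) X := by fun_prop
    obtain ⟨e, he⟩ := reIn_iff_exists_oracleComputes.1 this
    exact ⟨e, fun a => by simp [he]⟩
  · rintro ⟨e, he⟩
    have h : REIn (fun x : ℕ × ℕ => OracleComputes e X x.1 x.2) X :=
      reIn_iff_exists_oracleComputes.2 ⟨e, fun _ _ => Iff.rfl⟩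
    have h' : REIn (fun a => ∃ m, OracleComputes e X (Encodable.encode a) m) X :=
      reIn_exists (reIn_comp (f := fun x : α × ℕ => (Encodable.encode x.1, x.2)) h (by fun_prop))
    exact h'.of_eq fun a => (he a).symm

lemma ceStrIn_iff_reIn {S : Set (List Bool)} : CeStrIn X S ↔ REIn (· ∈ S) X :=
  reIn_iff_exists_oracleComputes_encode.symm

lemma isPrefixOf_emptyOracle_iff {σ : List Bool} :
    IsPrefixOf σ emptyOracle ↔ ∀ b ∈ σ, b = false := by
  rw [List.forall_mem_iff_get]
  exact forall_congr' fun i => eq_comm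

lemma reIn_emptyOracle_iff : REIn p emptyOracle ↔ REPred p := by
  refine ⟨fun ⟨q, hq, h⟩ => ?_, reIn_of_rePred⟩
  have : REPred fun a => ∃ σ : List Bool, (∀ b ∈ σ, b = false) ∧ q (σ, a) :=
    rePred_exists (rePred_and (rePred_of_primrecPred (by fun_prop)) (by fun_prop))
  exact this.of_eq fun a => by simp only [h, isPrefixOf_emptyOracle_iff]

lemma ceStr_iff_rePred {S : Set (List Bool)} : CeStr S ↔ REPred (· ∈ S) :=
  ceStrIn_iff_reIn.trans reIn_emptyOracle_iff

/-! ### The halting problem -/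

lemma exists_primrec_zeroJump (hp : REPred p) :
    ∃ g : α → ℕ, Primrec g ∧ ∀ a, zeroJump (g a) = true ↔ p a := by
  have : REPred fun x : ℕ × ℕ => ∃ a, Encodable.encode a = x.1 ∧ p a := by fun_prop
  obtain ⟨c, hc⟩ := rePred_iff_exists_code.1 this
  refine ⟨fun a => Encodable.encode (c.curry (Encodable.encode a)),
    Primrec.encode.comp (Nat.Partrec.Code.primrec₂_curry.comp (.const c) .encode), fun a => ?_⟩
  have hW (e n : ℕ) (he : e = Encodable.encode (c.curry (Encodable.encode a))) :
      WEnum e n ↔ p a := by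
    rw [he, WEnum, Denumerable.ofNat_encode, Nat.Partrec.Code.eval_curry]
    exact (hc (Encodable.encode a, n)).trans (by simp)
  have hjump (e : ℕ) : zeroJump e = true ↔ ∃ m, OracleComputes e emptyOracle e m :=
    @decide_eq_true_iff _ (Classical.propDecidable _)
  simp only [hjump, OracleComputes, hW _ _ rfl]
  exact ⟨fun ⟨_, _, _, h⟩ => h, fun h => ⟨0, [], isPrefixOf_nil _, h⟩⟩

lemma reIn_zeroJump_not (hp : REPred p) : REIn (fun a => ¬ p a) zeroJump := by
  obtain ⟨g, hg, h⟩ := exists_primrec_zeroJump hp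
  exact (reIn_apply_eq zeroJump hg false).of_eq fun a => by rw [← h, Bool.not_eq_true]

/-! ### Enumerations along an oracle -/

lemma REIn.exists_enumeration (hp : REIn p X) :
    ∃ f : List Bool → Option α, Primrec f ∧ ∀ a, p a ↔ ∃ n, f (strPrefix X n) = some a := by
  classical
  obtain ⟨q, hq, h⟩ := hp
  obtain ⟨r, hr, h'⟩ := rePred_iff_exists_primrecPred.1 hq
  refine ⟨fun ξ => (Encodable.decode ξ.length).bind fun x : (List Bool × α) × ℕ =>
    if x.1.1 <+: ξ ∧ r x then some x.1.2 else none, by fun_prop, fun a => ?_⟩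
  simp only [h, h', Option.bind_eq_some_iff, length_strPrefix, Option.ite_none_right_eq_some,
    Option.some_inj]
  constructor
  · rintro ⟨σ, hσ, k, hk⟩
    refine ⟨Encodable.encode ((σ, a), k), _, Encodable.encodek _, ⟨?_, hk⟩, rfl⟩
    refine hσ.prefix_of_length_le (isPrefixOf_strPrefix X _) ?_
    rw [length_strPrefix]
    calc σ.length ≤ Encodable.encode σ := Encodable.length_le_encode σ
      _ ≤ Encodable.encode (σ, a) := Nat.left_le_pair _ _
      _ ≤ _ := Nat.left_le_pair _ _
  · rintro ⟨n, ⟨⟨σ, _⟩, k⟩, -, ⟨hσ, hk⟩, rfl⟩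
    exact ⟨σ, (isPrefixOf_strPrefix X n).of_prefix hσ, k, hk⟩

end REIn

/-! ### Uniform families of `Π⁰₁` classes and their measures -/

lemma bitsOf_injOn (n : ℕ) : Set.InjOn (bitsOf · n) {k | k < 2 ^ n} :=
  Set.LeftInvOn.injOn fun _ => bval_bitsOf

lemma setOf_strPrefix_eq_biUnion (q : List Bool → Prop) [DecidablePred q] (n : ℕ) :
    {X | q (strPrefix X n)} =
      ⋃ k ∈ {k ∈ Finset.range (2 ^ n) | q (bitsOf k n)}, cylinder (bitsOf k n) := by
  ext X
  simp only [Set.mem_ofPred_eq, Set.mem_iUnion, Finset.mem_filter, Finset.mem_range,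
    _root_.cylinder, isPrefixOf_iff_strPrefix_eq, length_bitsOf, exists_prop]
  refine ⟨fun h => ⟨bval (strPrefix X n), ?_⟩, fun ⟨_, ⟨_, hq⟩, hk⟩ => hk ▸ hq⟩
  have hbits : bitsOf (bval (strPrefix X n)) n = strPrefix X n := by
    simpa [length_strPrefix] using bitsOf_bval (strPrefix X n)
  exact ⟨⟨by simpa [length_strPrefix] using bval_lt (strPrefix X n), hbits.symm ▸ h⟩, hbits.symm⟩

lemma measurableSet_setOf_strPrefix (q : List Bool → Prop) (n : ℕ) :
    MeasurableSet {X | q (strPrefix X n)} := by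
  classical
  rw [setOf_strPrefix_eq_biUnion]
  exact Finset.measurableSet_biUnion _ fun k _ => (isClopen_cylinder _).isOpen.measurableSet

lemma μCantor_setOf_strPrefix (q : List Bool → Prop) [DecidablePred q] (n : ℕ) :
    μCantor {X | q (strPrefix X n)} =
      {k ∈ Finset.range (2 ^ n) | q (bitsOf k n)}.card * 2⁻¹ ^ n := by
  rw [setOf_strPrefix_eq_biUnion,
    measure_biUnion_finset _ fun k _ => (isClopen_cylinder _).isOpen.measurableSet]
  · simp [μCantor_cylinder, length_bitsOf]
  · intro k hk l hl hne
    simp only [Finset.coe_filter, Finset.mem_range] at hk hl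
    have hbits : bitsOf k n ≠ bitsOf l n := fun h => hne (bitsOf_injOn n hk.1 hl.1 h)
    exact disjoint_cylinder (fun h => hbits (h.eq_of_length (by simp [length_bitsOf])))
      fun h => hbits (h.eq_of_length (by simp [length_bitsOf])).symm

@[fun_prop]
lemma primrec_bitsOf : Primrec fun x : ℕ × ℕ => bitsOf x.1 x.2 := by
  unfold bitsOf
  fun_prop

section Pi01Family

variable {α β : Type*} [Primcodable α] [Primcodable β] {V W : α → Set (ℕ → Bool)}

/-- A uniform family of `Π⁰₁` classes, presented by a single c.e. set enumerating the complements
of all its members. -/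
def Pi01Family (V : α → Set (ℕ → Bool)) : Prop :=
  ∃ p : α × List Bool → Prop, REPred p ∧ ∀ a, V a = (openOf {σ | p (a, σ)})ᶜ

lemma pi01_compl_openOf {S : Set (List Bool)} (hS : REPred (· ∈ S)) : Pi01 (openOf S)ᶜ :=
  ⟨S, ceStr_iff_rePred.2 hS, rfl⟩

lemma Pi01.pi01Family {P : Set (ℕ → Bool)} (hP : Pi01 P) : Pi01Family fun _ : α => P := by
  obtain ⟨S, hS, rfl⟩ := hP
  exact ⟨fun x => x.2 ∈ S, rePred_comp (ceStr_iff_rePred.1 hS) .snd, fun _ => rfl⟩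

lemma Pi01Family.pi01 (hV : Pi01Family V) (a : α) : Pi01 (V a) := by
  obtain ⟨p, hp, h⟩ := hV
  rw [h]
  exact pi01_compl_openOf (rePred_comp (f := (a, ·)) hp (by fun_prop))

lemma Pi01Family.comp (hV : Pi01Family V) {f : β → α} (hf : Primrec f) :
    Pi01Family fun b => V (f b) := by
  obtain ⟨p, hp, h⟩ := hV
  exact ⟨fun x => p (f x.1, x.2), by fun_prop, fun b => h _⟩

lemma Pi01Family.inter (hV : Pi01Family V) (hW : Pi01Family W) :
    Pi01Family fun a => V a ∩ W a := by
  obtain ⟨p, hp, h⟩ := hV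
  obtain ⟨q, hq, h'⟩ := hW
  refine ⟨fun x => p x ∨ q x, by fun_prop, fun a => ?_⟩
  ext X
  simp [h, h', mem_openOf, or_imp, forall_and]

lemma Pi01.inter {P Q : Set (ℕ → Bool)} (hP : Pi01 P) (hQ : Pi01 Q) : Pi01 (P ∩ Q) :=
  (hP.pi01Family.inter hQ.pi01Family).pi01 ()

lemma Pi01.isClosed {P : Set (ℕ → Bool)} (hP : Pi01 P) : IsClosed P := by
  obtain ⟨S, -, rfl⟩ := hP
  exact (isOpen_openOf S).isClosed_compl

lemma pi01Family_cylinder : Pi01Family _root_.cylinder := by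
  refine ⟨fun x => ¬ x.1 <+: x.2 ∧ ¬ x.2 <+: x.1, rePred_of_primrecPred (by fun_prop),
    fun σ => ?_⟩
  ext X
  simp only [Set.mem_compl_iff, mem_openOf, Set.mem_ofPred_eq]
  constructor
  · rintro hσ ⟨υ, ⟨h, h'⟩, hυ⟩
    exact (IsPrefixOf.prefix_or_prefix hσ hυ).elim h h'
  · intro h
    have hX := isPrefixOf_strPrefix X σ.length
    by_contra hσ
    refine h ⟨_, ⟨fun hle => hσ (hX.of_prefix hle), fun hle => hσ ?_⟩, hX⟩
    rwa [hle.eq_of_length (length_strPrefix _ _)] at hX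

lemma pi01Family_block : Pi01Family fun x : ℕ × ℕ => block x.1 x.2 := by
  refine ⟨fun x => ∃ j < x.1.2, x.2[Nat.pair x.1.1 j]? = some false,
    rePred_of_primrecPred (by fun_prop), fun x => ?_⟩
  ext X
  simp only [block, Set.mem_ofPred_eq, Set.mem_compl_iff, mem_openOf]
  constructor
  · rintro hX ⟨υ, ⟨j, hj, h⟩, hυ⟩
    obtain ⟨hlt, h⟩ := List.getElem?_eq_some_iff.1 h
    have hfalse : X (Nat.pair x.1 j) = false := (hυ ⟨_, hlt⟩).trans h
    exact absurd (hX j hj) (by simp [hfalse])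
  · refine fun h j hj => by_contra fun hne => h ⟨_, ⟨j, hj, ?_⟩,
      isPrefixOf_strPrefix X (Nat.pair x.1 j + 1)⟩
    rw [getElem?_strPrefix X (Nat.lt_succ_self _), Bool.eq_false_of_not_eq_true hne]

/-- At stage `t`, only the enumeration steps below `t` of axioms with code below `t` are seen; the
measure of the class is the limit of the decreasing measures of these clopen approximations. -/
lemma Pi01Family.exists_approximation (hV : Pi01Family V) :
    ∃ q : (α × ℕ) × List Bool → Prop, PrimrecPred q ∧
      ∀ a, Antitone (fun t => {X | q ((a, t), strPrefix X t)}) ∧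
        V a = ⋂ t, {X | q ((a, t), strPrefix X t)} := by
  obtain ⟨p, hp, h⟩ := hV
  obtain ⟨r, hr, hpr⟩ := rePred_iff_exists_primrecPred.1 hp
  let hit (x : (α × ℕ) × List Bool) : Prop := ∃ n < x.1.2, ∃ y : List Bool × ℕ,
    Encodable.decode n = some y ∧ y.1 <+: x.2 ∧ r ((x.1.1, y.1), y.2)
  have hhit : PrimrecPred hit := by fun_prop
  refine ⟨fun x => ¬ hit x, by fun_prop, fun a => ⟨fun s t hst X => mt ?_, ?_⟩⟩
  · rintro ⟨n, hn, y, hy, hpre, hry⟩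
    exact ⟨n, hn.trans_le hst, y, hy, hpre.trans (strPrefix_prefix_strPrefix X hst), hry⟩
  · rw [h, ← compl_compl (⋂ t, _), Set.compl_iInter]
    congr 1
    ext X
    simp only [mem_openOf, Set.mem_iUnion, Set.mem_compl_iff, Set.mem_ofPred_eq, not_not, hpr]
    constructor
    · rintro ⟨σ, ⟨k, hk⟩, hσ⟩
      refine ⟨Encodable.encode (σ, k) + 1, _, Nat.lt_succ_self _, _, Encodable.encodek _,
        hσ.prefix_of_length_le (isPrefixOf_strPrefix X _) ?_, hk⟩
      rw [length_strPrefix]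
      calc σ.length ≤ Encodable.encode σ := Encodable.length_le_encode σ
        _ ≤ Encodable.encode (σ, k) := Nat.left_le_pair _ _
        _ ≤ _ := Nat.le_succ _
    · rintro ⟨t, n, -, ⟨σ, k⟩, -, hσ, hk⟩
      exact ⟨σ, ⟨k, hk⟩, (isPrefixOf_strPrefix X t).of_prefix hσ⟩

lemma Pi01Family.exists_primrec_μCantor_eq_iInf (hV : Pi01Family V) :
    ∃ N : α × ℕ → ℕ, Primrec N ∧ ∀ a, μCantor (V a) = ⨅ t, (N (a, t) * 2⁻¹ ^ t : ℝ≥0∞) := by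
  classical
  obtain ⟨q, hq, h⟩ := hV.exists_approximation
  refine ⟨fun x => ((List.range (2 ^ x.2)).filter fun k => q (x, bitsOf k x.2)).length,
    by fun_prop, fun a => ?_⟩
  rw [(h a).2, (h a).1.measure_iInter
    (fun t => (measurableSet_setOf_strPrefix (fun σ => q ((a, t), σ)) t).nullMeasurableSet)
    ⟨0, measure_ne_top _ _⟩]
  exact iInf_congr fun t => μCantor_setOf_strPrefix (fun σ => q ((a, t), σ)) t

lemma Pi01Family.rePred_μCantor_mul_lt (hV : Pi01Family V) {f g : α → ℕ} (hf : Primrec f)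
    (hg : Primrec g) : REPred fun a => μCantor (V a) * g a < f a := by
  obtain ⟨N, hN, h⟩ := hV.exists_primrec_μCantor_eq_iInf
  have hstage : REPred fun a => ∃ t, N (a, t) * g a < f a * 2 ^ t := by fun_prop
  refine hstage.of_eq fun a => ?_
  rw [h, ENNReal.iInf_mul (by simp), iInf_lt_iff]
  refine exists_congr fun t => ?_
  rw [mul_right_comm, ← ENNReal.inv_pow, ← div_eq_mul_inv, ENNReal.div_lt_iff (by simp) (by simp)]
  exact_mod_cast Iff.rfl

end Pi01Family

/-! ### Prefix-free machines -/

section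

variable {α : Type*} [Primcodable α]

lemma exists_code_of_rePred {r : α → ℕ → Prop} (hr : REPred fun x : α × ℕ => r x.1 x.2)
    (hunique : ∀ a y y', r a y → r a y' → y = y') :
    ∃ c : Nat.Partrec.Code, ∀ a y, y ∈ c.eval (Encodable.encode a) ↔ r a y := by
  classical
  obtain ⟨q, hq, h⟩ := rePred_iff_exists_primrecPred.1 hr
  let step (a : α) (n : ℕ) : Option ℕ :=
    if q ((a, n.unpair.1), n.unpair.2) then some n.unpair.1 else none
  have hstep : Primrec fun x : α × ℕ => step x.1 x.2 := by fun_prop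
  have hpart : Partrec fun a => Nat.rfindOpt (step a) := Partrec.rfindOpt hstep.to_comp
  obtain ⟨c, hc⟩ := Nat.Partrec.Code.exists_code.1 hpart
  have hmem {a n y} : y ∈ step a n ↔ q ((a, n.unpair.1), n.unpair.2) ∧ n.unpair.1 = y := by
    simp [step]
  have hsound {a y} (hy : y ∈ Nat.rfindOpt (step a)) : r a y := by
    obtain ⟨n, hn⟩ := Nat.rfindOpt_spec hy
    obtain ⟨hqn, rfl⟩ := hmem.1 hn
    exact (h (a, _)).2 ⟨_, hqn⟩
  refine ⟨c, fun a y => ?_⟩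
  have hca : c.eval (Encodable.encode a) = Nat.rfindOpt (step a) := by
    simp [hc, Part.bind_some, Part.map_id']
  rw [hca]
  refine ⟨hsound, fun hy => ?_⟩
  obtain ⟨k, hk⟩ := (h (a, y)).1 hy
  have hdom : (Nat.rfindOpt (step a)).Dom :=
    Nat.rfindOpt_dom.2 ⟨Nat.pair y k, y, hmem.2 (by simpa using hk)⟩
  rw [hunique a y _ hy (hsound (Part.get_mem hdom))]
  exact Part.get_mem hdom

end

lemma PrefixFreeSet.mono {S T : Set (List Bool)} (hT : PrefixFreeSet T) (h : S ⊆ T) :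
    PrefixFreeSet S :=
  fun σ hσ τ hτ => hT σ (h hσ) τ (h hτ)

/-- The programs on which the `e`-th machine halts within `k` steps. -/
def machineDomAt (e k : ℕ) : Set (List Bool) :=
  {σ | ((Denumerable.ofNat Nat.Partrec.Code e).evaln k (Encodable.encode σ)).isSome}

/-- The `e`-th machine outputs `y` on `σ` before its domain is seen not to be prefix-free. This
turns the list of all machines into a uniform list of prefix-free machines. -/
def PrefixFreeOutputs (e : ℕ) (σ : List Bool) (y : ℕ) : Prop :=
  ∃ k, PrefixFreeSet (machineDomAt e k) ∧
    (Denumerable.ofNat Nat.Partrec.Code e).evaln k (Encodable.encode σ) = some y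

lemma machineDomAt_mono (e : ℕ) : Monotone (machineDomAt e) := by
  intro k l hkl σ hσ
  obtain ⟨y, hy⟩ := Option.isSome_iff_exists.1 hσ
  exact Option.isSome_iff_exists.2 ⟨y, Nat.Partrec.Code.evaln_mono hkl hy⟩

lemma machineDomAt_subset_machineDom (e k : ℕ) : machineDomAt e k ⊆ machineDom e := by
  intro σ hσ
  obtain ⟨y, hy⟩ := Option.isSome_iff_exists.1 hσ
  exact Part.dom_iff_mem.2 ⟨y, Nat.Partrec.Code.evaln_sound hy⟩

lemma PrefixFreeOutputs.unique {e : ℕ} {σ : List Bool} {y y' : ℕ} (h : PrefixFreeOutputs e σ y)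
    (h' : PrefixFreeOutputs e σ y') : y = y' := by
  obtain ⟨k, -, hk⟩ := h
  obtain ⟨l, -, hl⟩ := h'
  exact Part.mem_unique (Nat.Partrec.Code.evaln_sound hk) (Nat.Partrec.Code.evaln_sound hl)

lemma prefixFreeSet_setOf_prefixFreeOutputs (e : ℕ) :
    PrefixFreeSet {σ | ∃ y, PrefixFreeOutputs e σ y} := by
  rintro σ ⟨y, k, hk, hy⟩ τ ⟨z, l, hl, hz⟩
  have hσ : σ ∈ machineDomAt e k := Option.isSome_iff_exists.2 ⟨y, hy⟩
  have hτ : τ ∈ machineDomAt e l := Option.isSome_iff_exists.2 ⟨z, hz⟩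
  rcases le_total k l with hkl | hkl
  · exact hl σ (machineDomAt_mono e hkl hσ) τ hτ
  · exact hk σ hσ τ (machineDomAt_mono e hkl hτ)

lemma PrefixFreeMachine.prefixFreeOutputs {e : ℕ} (he : PrefixFreeMachine e) {σ : List Bool}
    {y : ℕ} (h : y ∈ (Denumerable.ofNat Nat.Partrec.Code e).eval (Encodable.encode σ)) :
    PrefixFreeOutputs e σ y := by
  obtain ⟨k, hk⟩ := Nat.Partrec.Code.evaln_complete.1 h
  exact ⟨k, he.mono (machineDomAt_subset_machineDom e k), hk⟩

lemma prefixFreeSet_machineDomAt_iff {e k : ℕ} :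
    PrefixFreeSet (machineDomAt e k) ↔
      ¬ ∃ m < k, ∃ σ : List Bool, Encodable.decode m = some σ ∧
        ∃ n < k, ∃ τ : List Bool, Encodable.decode n = some τ ∧
        (((Denumerable.ofNat Nat.Partrec.Code e).evaln k (Encodable.encode σ)).isSome = true ∧
          ((Denumerable.ofNat Nat.Partrec.Code e).evaln k (Encodable.encode τ)).isSome = true) ∧
        σ <+: τ ∧ ¬ σ = τ := by
  have hlt {σ : List Bool} (hσ : σ ∈ machineDomAt e k) : Encodable.encode σ < k := by
    obtain ⟨y, hy⟩ := Option.isSome_iff_exists.1 hσ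
    exact Nat.Partrec.Code.evaln_bound hy
  constructor
  · rintro h ⟨_, -, σ, -, _, -, τ, -, ⟨hσ, hτ⟩, hpre, hne⟩
    exact hne (h σ hσ τ hτ hpre)
  · intro h σ hσ τ hτ hpre
    by_contra hne
    exact h ⟨_, hlt hσ, σ, Encodable.encodek _, _, hlt hτ, τ, Encodable.encodek _, ⟨hσ, hτ⟩,
      hpre, hne⟩

@[fun_prop]
lemma rePred_prefixFreeOutputs :
    REPred fun x : (ℕ × List Bool) × ℕ => PrefixFreeOutputs x.1.1 x.1.2 x.2 := by
  unfold PrefixFreeOutputs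
  simp only [prefixFreeSet_machineDomAt_iff]
  exact rePred_exists (rePred_of_primrecPred (by fun_prop))

lemma tsum_two_inv_pow_two_mul_add_two_le_one : ∑' e : ℕ, (2⁻¹ : ℝ≥0∞) ^ (2 * e + 2) ≤ 1 := by
  calc ∑' e : ℕ, (2⁻¹ : ℝ≥0∞) ^ (2 * e + 2)
      ≤ ∑' e : ℕ, (2⁻¹ : ℝ≥0∞) ^ (e + 1) :=
        ENNReal.tsum_le_tsum fun e => pow_le_pow_right_of_le_one' (by simp) (by lia)
    _ = 1 := by
        rw [ENNReal.tsum_geometric_add_one, ENNReal.one_sub_inv_two, inv_inv,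
          ENNReal.inv_mul_cancel two_ne_zero ofNat_ne_top]

lemma tsum_prefixFreeOutputs_le (c : ℕ) :
    ∑' x : {x : ℕ × List Bool // ∃ y, PrefixFreeOutputs x.1 x.2 y},
      (2⁻¹ : ℝ≥0∞) ^ (x.1.2.length + 2 * x.1.1 + 2 + c) ≤ 2⁻¹ ^ c := by
  let E := Equiv.subtypeProdEquivSigmaSubtype fun (e : ℕ) (σ : List Bool) =>
    ∃ y, PrefixFreeOutputs e σ y
  calc _ = ∑' x : Σ e, {σ : List Bool // ∃ y, PrefixFreeOutputs e σ y},
          (2⁻¹ : ℝ≥0∞) ^ c * (2⁻¹ ^ (2 * x.1 + 2) * 2⁻¹ ^ x.2.1.length) := by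
        rw [← E.tsum_eq]
        refine tsum_congr fun x => ?_
        simp only [← pow_add]
        congr 1
        simp only [E, Equiv.subtypeProdEquivSigmaSubtype, Equiv.coe_fn_mk]
        lia
    _ = 2⁻¹ ^ c * ∑' e, (2⁻¹ : ℝ≥0∞) ^ (2 * e + 2) *
          weight {σ | ∃ y, PrefixFreeOutputs e σ y} := by
        simp only [ENNReal.tsum_mul_left, ENNReal.tsum_sigma', weight]
        rfl
    _ ≤ 2⁻¹ ^ c * ∑' e, (2⁻¹ : ℝ≥0∞) ^ (2 * e + 2) := by
        gcongr with e
        exact mul_le_of_le_one_right' (prefixFreeSet_setOf_prefixFreeOutputs e).weight_le_one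
    _ ≤ 2⁻¹ ^ c := mul_le_of_le_one_right' tsum_two_inv_pow_two_mul_add_two_le_one

/-! ### The Kraft–Chaitin theorem -/

section KraftChaitin

/-- The partial sum `∑_{s < t} 2 ^ (-v s)` of the weights requested before stage `t`, as a pair of
numerator and denominator; stages with `v s = none` request nothing. -/
def kraftSum (v : ℕ → Option ℕ) : ℕ → ℕ × ℕ
  | 0 => (0, 1)
  | t + 1 => ((v t).map fun w => ((kraftSum v t).1 * 2 ^ w + (kraftSum v t).2,
      (kraftSum v t).2 * 2 ^ w)).getD (kraftSum v t)

/-- The program of length `w + 1` allotted to a request of weight `w` at stage `t`: the second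
dyadic interval of length `2 ^ (-w - 1)` to start after the mass `kraftSum v t` already used up. -/
def kraftWord (v : ℕ → Option ℕ) (t w : ℕ) : List Bool :=
  bitsOf ((kraftSum v t).1 * 2 ^ (w + 1) / (kraftSum v t).2 + 1) (w + 1)

variable {v : ℕ → Option ℕ}

lemma primrec_kraftSum (hv : Primrec v) : Primrec (kraftSum v) := by
  have hstep : Primrec₂ fun (t : ℕ) (S : ℕ × ℕ) =>
      ((v t).map fun w => (S.1 * 2 ^ w + S.2, S.2 * 2 ^ w)).getD S :=
    Primrec.option_getD.comp (Primrec.option_map (by fun_prop) (by unfold Primrec₂; fun_prop)) .snd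
  refine (Primrec.nat_rec₁ (0, 1) hstep).of_eq fun t => ?_
  induction t with
  | zero => rfl
  | succ t ih => simp only [ih, kraftSum]

lemma kraftSum_snd_pos (v : ℕ → Option ℕ) (t : ℕ) : 0 < (kraftSum v t).2 := by
  induction t with
  | zero => simp [kraftSum]
  | succ t ih => cases h : v t <;> simp [kraftSum, h, ih]

/-- The real number represented by `kraftSum v t`. -/
noncomputable def kraftRatio (v : ℕ → Option ℕ) (t : ℕ) : ℝ := (kraftSum v t).1 / (kraftSum v t).2

lemma kraftRatio_eq_sum (v : ℕ → Option ℕ) (t : ℕ) :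
    kraftRatio v t = ∑ s ∈ Finset.range t, (v s).elim 0 (2⁻¹ ^ · : ℕ → ℝ) := by
  induction t with
  | zero => simp [kraftRatio, kraftSum]
  | succ t ih =>
    have := kraftSum_snd_pos v t
    rw [Finset.sum_range_succ, ← ih]
    cases h : v t
    · simp [kraftRatio, kraftSum, h]
    · simp [kraftRatio, kraftSum, h]
      field_simp

lemma kraftRatio_succ {t w : ℕ} (h : v t = some w) :
    kraftRatio v (t + 1) = kraftRatio v t + 2⁻¹ ^ w := by
  simp [kraftRatio_eq_sum, Finset.sum_range_succ, h]

lemma kraftRatio_monotone (v : ℕ → Option ℕ) : Monotone (kraftRatio v) := by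
  refine monotone_nat_of_le_succ fun t => ?_
  rw [kraftRatio_eq_sum, kraftRatio_eq_sum, Finset.sum_range_succ, le_add_iff_nonneg_right]
  cases v t <;> simp

lemma kraftRatio_le_one (hsum : ∑' t, (v t).elim 0 (2⁻¹ ^ · : ℕ → ℝ≥0∞) ≤ 1) (t : ℕ) :
    kraftRatio v t ≤ 1 := by
  have h (s : ℕ) : ENNReal.ofReal ((v s).elim 0 (2⁻¹ ^ · : ℕ → ℝ)) =
      (v s).elim 0 (2⁻¹ ^ · : ℕ → ℝ≥0∞) := by
    cases v s <;> simp [ENNReal.ofReal_pow, ENNReal.ofReal_inv_of_pos, ENNReal.inv_pow]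
  rw [← ENNReal.ofReal_le_one, kraftRatio_eq_sum,
    ENNReal.ofReal_sum_of_nonneg fun s _ => by cases v s <;> simp]
  simp only [h]
  exact (ENNReal.sum_le_tsum _).trans hsum

lemma dyadicInterval_kraftWord_subset (hsum : ∑' t, (v t).elim 0 (2⁻¹ ^ · : ℕ → ℝ≥0∞) ≤ 1)
    {t w : ℕ} (ht : v t = some w) :
    dyadicInterval (kraftWord v t w) ⊆ Set.Ico (kraftRatio v t) (kraftRatio v (t + 1)) := by
  have hle := kraftRatio_le_one hsum (t + 1)
  rw [kraftRatio_succ ht] at hle ⊢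
  set q := (kraftSum v t).1 * 2 ^ (w + 1) / (kraftSum v t).2 with hq
  have hD : (0 : ℝ) < (kraftSum v t).2 := mod_cast kraftSum_snd_pos v t
  have hfloor : ⌊kraftRatio v t * 2 ^ (w + 1)⌋₊ = q := by
    rw [hq, kraftRatio, div_mul_eq_mul_div, ← Nat.floor_div_eq_div (K := ℝ)]
    push_cast
    rfl
  have hpow : (2⁻¹ : ℝ) ^ w * 2 ^ (w + 1) = 2 := by
    rw [pow_succ, ← mul_assoc, ← mul_pow]; norm_num
  have hpos : (0 : ℝ) < 2 ^ (w + 1) := by positivity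
  obtain ⟨hql, hqr⟩ := (Nat.floor_eq_iff (by unfold kraftRatio; positivity)).1 hfloor
  have hlt : q + 1 < 2 ^ (w + 1) := by
    have : (kraftRatio v t + 2⁻¹ ^ w) * 2 ^ (w + 1) ≤ 1 * 2 ^ (w + 1) := by gcongr
    rw [← Nat.cast_lt (α := ℝ)]
    push_cast
    linarith
  rw [dyadicInterval, kraftWord, length_bitsOf, bval_bitsOf hlt]
  apply Set.Ico_subset_Ico
  · rw [le_div_iff₀ hpos]
    exact_mod_cast hqr.le
  · rw [div_le_iff₀ hpos, add_mul, hpow]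
    push_cast
    linarith

lemma eq_of_kraftWord_prefix (hsum : ∑' t, (v t).elim 0 (2⁻¹ ^ · : ℕ → ℝ≥0∞) ≤ 1) {s t w w' : ℕ}
    (hs : v s = some w) (ht : v t = some w') (h : kraftWord v s w <+: kraftWord v t w') :
    s = t := by
  by_contra hst
  have hne : (dyadicInterval (kraftWord v t w')).Nonempty :=
    Set.nonempty_Ico.2 (by gcongr; linarith)
  obtain ⟨y, hy⟩ := hne
  exact Set.disjoint_left.1 ((kraftRatio_monotone v).pairwise_disjoint_on_Ico_succ hst)
    (dyadicInterval_kraftWord_subset hsum hs (dyadicInterval_antitone h hy))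
    (dyadicInterval_kraftWord_subset hsum ht hy)

variable {β : Type*} [Primcodable β] {p : β → Prop} {w x : β → ℕ}

lemma exists_prefixFreeMachine_of_enumeration {f : ℕ → Option β} (hf : Primrec f) (hw : Primrec w)
    (hx : Primrec x) (hsum : ∑' t, (f t).elim 0 (fun b => (2⁻¹ : ℝ≥0∞) ^ w b) ≤ 1) :
    ∃ e, PrefixFreeMachine e ∧ ∀ t b, f t = some b → ∃ σ : List Bool, σ.length = w b + 1 ∧
      x b ∈ (Denumerable.ofNat Nat.Partrec.Code e).eval (Encodable.encode σ) := by
  let v (t : ℕ) : Option ℕ := (f t).map w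
  have hv : Primrec v := Primrec.option_map hf (hw.comp .snd)
  have hsum' : ∑' t, (v t).elim 0 (2⁻¹ ^ · : ℕ → ℝ≥0∞) ≤ 1 := by
    simpa only [v, Option.elim_map, Function.comp_def] using hsum
  have hvt {t b} (h : f t = some b) : v t = some (w b) := by simp [v, h]
  let r (σ : List Bool) (y : ℕ) : Prop :=
    ∃ t b, f t = some b ∧ kraftWord v t (w b) = σ ∧ x b = y
  have hr : REPred fun z : List Bool × ℕ => r z.1 z.2 := by
    have := primrec_kraftSum hv
    unfold r kraftWord
    fun_prop
  have hpre {σ σ' y y'} (h : r σ y) (h' : r σ' y') (hσ : σ <+: σ') : σ = σ' ∧ y = y' := by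
    obtain ⟨s, b, hb, rfl, rfl⟩ := h
    obtain ⟨t, b', hb', rfl, rfl⟩ := h'
    obtain rfl := eq_of_kraftWord_prefix hsum' (hvt hb) (hvt hb') hσ
    obtain rfl := Option.some_injective _ (hb.symm.trans hb')
    exact ⟨rfl, rfl⟩
  obtain ⟨c, hc⟩ := exists_code_of_rePred hr fun σ y y' h h' => (hpre h h' List.prefix_rfl).2
  have hdom {σ} (hσ : σ ∈ machineDom (Encodable.encode c)) : ∃ y, r σ y := by
    simpa only [machineDom, Set.mem_ofPred_eq, Denumerable.ofNat_encode, Part.dom_iff_mem, hc]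
      using hσ
  refine ⟨Encodable.encode c, fun σ hσ τ hτ h => ?_, fun t b hb =>
    ⟨kraftWord v t (w b), length_bitsOf _ _, ?_⟩⟩
  · obtain ⟨y, hy⟩ := hdom hσ
    obtain ⟨z, hz⟩ := hdom hτ
    exact (hpre hy hz h).1
  · rw [Denumerable.ofNat_encode, hc]
    exact ⟨t, b, hb, rfl, rfl⟩

lemma exists_primrec_injective_enumeration (hp : REPred p) :
    ∃ f : ℕ → Option β, Primrec f ∧ (∀ b, p b ↔ ∃ n, f n = some b) ∧
      ∀ m n b, f m = some b → f n = some b → m = n := by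
  classical
  obtain ⟨q, hq, h⟩ := rePred_iff_exists_primrecPred.1 hp
  let f (n : ℕ) : Option β := (Encodable.decode n).bind fun y : β × ℕ =>
    if q y ∧ (¬ ∃ k < y.2, q (y.1, k)) ∧ Encodable.encode y = n then some y.1 else none
  have hf {n b} : f n = some b ↔
      ∃ k, (q (b, k) ∧ ∀ l < k, ¬ q (b, l)) ∧ Encodable.encode (b, k) = n := by
    simp only [f, Option.bind_eq_some_iff, Option.ite_none_right_eq_some, Option.some_inj]
    constructor
    · rintro ⟨⟨b, k⟩, -, ⟨hk, hmin, rfl⟩, rfl⟩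
      exact ⟨k, ⟨hk, by simpa using hmin⟩, rfl⟩
    · rintro ⟨k, ⟨hk, hmin⟩, rfl⟩
      exact ⟨(b, k), Encodable.encodek _, ⟨hk, by simpa using hmin, rfl⟩, rfl⟩
  refine ⟨f, by fun_prop, fun b => ?_, fun m n b hm hn => ?_⟩
  · simp only [h, hf]
    refine ⟨fun hb => ⟨_, Nat.find hb, ⟨Nat.find_spec hb, fun _ => Nat.find_min hb⟩, rfl⟩,
      fun ⟨_, k, hk, _⟩ => ⟨k, hk.1⟩⟩
  · obtain ⟨k, ⟨hk, hkmin⟩, rfl⟩ := hf.1 hm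
    obtain ⟨l, ⟨hl, hlmin⟩, rfl⟩ := hf.1 hn
    have hkl : k = l :=
      le_antisymm (not_lt.1 fun hlt => hkmin l hlt hl) (not_lt.1 fun hlt => hlmin k hlt hk)
    rw [hkl]

theorem kraft_chaitin (hp : REPred p) (hw : Primrec w) (hx : Primrec x)
    (hsum : ∑' b : {b // p b}, (2⁻¹ : ℝ≥0∞) ^ w b ≤ 1) :
    ∃ e, PrefixFreeMachine e ∧ ∀ b, p b → ∃ σ : List Bool, σ.length = w b + 1 ∧
      x b ∈ (Denumerable.ofNat Nat.Partrec.Code e).eval (Encodable.encode σ) := by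
  obtain ⟨f, hf, hpf, hinj⟩ := exists_primrec_injective_enumeration hp
  choose n hn using fun b : {b // p b} => (hpf b).1 b.2
  have hninj : n.Injective := fun b b' hbb' =>
    Subtype.ext (Option.some_injective _ ((hn b).symm.trans (hbb' ▸ hn b')))
  have hsupp : (Function.support fun t => (f t).elim 0 fun b => (2⁻¹ : ℝ≥0∞) ^ w b) ⊆
      Set.range n := by
    intro t ht
    obtain ⟨b, hb⟩ : ∃ b, f t = some b := by
      cases h : f t <;> simp_all
    exact ⟨⟨b, (hpf b).2 ⟨t, hb⟩⟩, hinj _ _ b (hn _) hb⟩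
  obtain ⟨e, he, hout⟩ := exists_prefixFreeMachine_of_enumeration hf hw hx (by
    simpa only [← hninj.tsum_eq hsupp, hn, Option.elim_some] using hsum)
  exact ⟨e, he, fun b hb => hout _ b (hn ⟨b, hb⟩)⟩

lemma Kcpx_le {e x : ℕ} {σ : List Bool} (he : PrefixFreeMachine e)
    (h : x ∈ (Denumerable.ofNat Nat.Partrec.Code e).eval (Encodable.encode σ)) :
    Kcpx x ≤ σ.length + 2 * e + 2 :=
  Nat.sInf_le ⟨e, σ, he, h, rfl⟩

lemma exists_Kcpx_eq (x : ℕ) : ∃ e, ∃ σ : List Bool, PrefixFreeMachine e ∧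
    x ∈ (Denumerable.ofNat Nat.Partrec.Code e).eval (Encodable.encode σ) ∧
    Kcpx x = σ.length + 2 * e + 2 := by
  obtain ⟨e, he, hout⟩ := kraft_chaitin (p := fun _ : Unit => True) (w := fun _ => 0)
    (x := fun _ => x) (rePred_of_primrecPred ⟨inferInstance, .const _⟩) (.const 0) (.const x)
    (by simp)
  obtain ⟨σ, -, hσ⟩ := hout () trivial
  let S : Set ℕ := {k | ∃ e, ∃ σ : List Bool, PrefixFreeMachine e ∧
    x ∈ (Denumerable.ofNat Nat.Partrec.Code e).eval (Encodable.encode σ) ∧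
    k = σ.length + 2 * e + 2}
  have hS : S.Nonempty := ⟨_, e, σ, he, hσ, rfl⟩
  exact Nat.sInf_mem hS

lemma exists_Kcpx_le_add (hp : REPred p) (hw : Primrec w) (hx : Primrec x)
    (hsum : ∑' b : {b // p b}, (2⁻¹ : ℝ≥0∞) ^ w b < ⊤) :
    ∃ c, ∀ b, p b → Kcpx (x b) ≤ w b + c := by
  obtain ⟨N, hN⟩ := ENNReal.exists_nat_gt hsum.ne
  have hshift : ∑' b : {b // p b}, (2⁻¹ : ℝ≥0∞) ^ (w b + N) ≤ 1 := by
    simp only [pow_add, ENNReal.tsum_mul_right]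
    rw [← ENNReal.inv_pow (n := N), ← div_eq_mul_inv]
    refine ENNReal.div_le_of_le_mul ?_
    rw [one_mul]
    exact hN.le.trans (mod_cast Nat.lt_two_pow_self.le)
  obtain ⟨e, he, hout⟩ := kraft_chaitin hp (w := fun b => w b + N) (by fun_prop) hx hshift
  refine ⟨N + 1 + 2 * e + 2, fun b hb => ?_⟩
  obtain ⟨σ, hσ, hb⟩ := hout b hb
  have := Kcpx_le he hb
  lia

end KraftChaitin

/-! ### Positive-measure classes of random sequences -/

lemma tsum_subtype_inv_two_pow_encode_add_le {α : Type*} [Encodable α] (p : α → Prop) (b : ℕ) :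
    ∑' a : {a // p a}, (2⁻¹ : ℝ≥0∞) ^ (Encodable.encode a.1 + 1 + b) ≤ 2⁻¹ ^ b := by
  calc ∑' a : {a // p a}, (2⁻¹ : ℝ≥0∞) ^ (Encodable.encode a.1 + 1 + b)
      ≤ ∑' a : α, (2⁻¹ : ℝ≥0∞) ^ (Encodable.encode a + 1 + b) :=
        ENNReal.tsum_comp_le_tsum_of_injective Subtype.val_injective _
    _ = (∑' a : α, (2⁻¹ : ℝ≥0∞) ^ Encodable.encode a) * (2⁻¹ * 2⁻¹ ^ b) := by
        simp only [pow_add, pow_one, mul_assoc, ENNReal.tsum_mul_right]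
    _ ≤ 2 * (2⁻¹ * 2⁻¹ ^ b) := by
        gcongr
        exact ENNReal.tsum_geometric_two_encode_le_two
    _ = 2⁻¹ ^ b := by
        rw [← mul_assoc, ENNReal.mul_inv_cancel two_ne_zero ofNat_ne_top, one_mul]

/-- A triple `((e, σ), ξ)`, read as the claim that the program `σ` for the `e`-th machine describes
the length of `ξ`. -/
abbrev Claim : Type := (ℕ × List Bool) × List Bool

namespace Claim

/-- The claim holds: its program outputs `1 ^ |ξ|`. -/
def Valid (j : Claim) : Prop :=
  PrefixFreeOutputs j.1.1 j.1.2 (Encodable.encode (List.replicate j.2.length true))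

/-- The length charged for the claim's program by `Kcpx`. -/
def cost (j : Claim) : ℕ := j.1.2.length + 2 * j.1.1 + 2

/-- The event of measure `2 ^ (-cost - c)` attached to a claim; the events attached to different
claims are independent. -/
def event (c : ℕ) (j : Claim) : Set (ℕ → Bool) := block (Encodable.encode j) (j.cost + c)

/-- The `c`-th level of a Martin-Löf test relative to `A`: the events of all valid claims about
initial segments of `A`. -/
def test (A : ℕ → Bool) (c : ℕ) : Set (ℕ → Bool) :=
  ⋃ j : {j : Claim // j.Valid ∧ IsPrefixOf j.2 A}, event c j

@[fun_prop]
lemma primrec_cost : Primrec cost := by unfold cost; fun_prop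

@[fun_prop]
lemma rePred_valid : REPred Valid := by
  have hones : Primrec fun n => List.replicate n true :=
    (Primrec.list_map Primrec.list_range (Primrec.const true).to₂).of_eq fun n => by simp
  have hlen : Primrec fun j : Claim => j.2.length := by fun_prop
  exact rePred_comp
    (f := fun j : Claim => (j.1, Encodable.encode (List.replicate j.2.length true)))
    rePred_prefixFreeOutputs (Primrec.fst.pair (Primrec.encode.comp (hones.comp hlen)))

lemma isClopen_event (c : ℕ) (j : Claim) : IsClopen (event c j) := isClopen_block _ _

lemma isOpen_test (A : ℕ → Bool) (c : ℕ) : IsOpen (test A c) :=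
  isOpen_iUnion fun j => (isClopen_event c j).isOpen

lemma μCantor_test_le (A : ℕ → Bool) (c : ℕ) : μCantor (test A c) ≤ 2⁻¹ ^ c := by
  let program (j : {j : Claim // j.Valid ∧ IsPrefixOf j.2 A}) :
      {x : ℕ × List Bool // ∃ y, PrefixFreeOutputs x.1 x.2 y} := ⟨j.1.1, _, j.2.1⟩
  have hinj : program.Injective := by
    rintro ⟨⟨p, ξ⟩, hξ, hA⟩ ⟨⟨p', ξ'⟩, hξ', hA'⟩ h
    obtain rfl : p = p' := congrArg Subtype.val h
    have hlen := congrArg List.length (Encodable.encode_injective (hξ.unique hξ'))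
    simp only [List.length_replicate] at hlen
    obtain rfl : ξ = ξ' := by
      exact (isPrefixOf_iff_strPrefix_eq.1 hA).symm.trans
        (hlen ▸ isPrefixOf_iff_strPrefix_eq.1 hA')
    rfl
  calc μCantor (test A c)
      ≤ ∑' j : {j : Claim // j.Valid ∧ IsPrefixOf j.2 A}, μCantor (event c j) :=
        measure_iUnion_le _
    _ = ∑' j, (2⁻¹ : ℝ≥0∞) ^ ((program j).1.2.length + 2 * (program j).1.1 + 2 + c) := by
        simp only [event, μCantor_block]
        rfl
    _ ≤ _ := ENNReal.tsum_comp_le_tsum_of_injective hinj _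
    _ ≤ 2⁻¹ ^ c := tsum_prefixFreeOutputs_le c

lemma mlTestIn_test (A : ℕ → Bool) : MLTestIn A (test A) := by
  have hRE : REIn (fun x : ℕ × List Bool => ∃ j : Claim, (j.Valid ∧ IsPrefixOf j.2 A) ∧
      ∀ k < j.cost + x.1, x.2[Nat.pair (Encodable.encode j) k]? = some true) A := by
    have := reIn_isPrefixOf A
    have hp : PrimrecPred fun y : (ℕ × List Bool) × Claim => ∀ k < y.2.cost + y.1.1,
        y.1.2[Nat.pair (Encodable.encode y.2) k]? = some true := by fun_prop
    exact reIn_exists (reIn_and (by fun_prop) (reIn_of_primrecPred hp))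
  obtain ⟨e, he⟩ := reIn_iff_exists_oracleComputes_encode.1 hRE
  refine ⟨⟨e, fun c => ?_⟩, μCantor_test_le A⟩
  ext X
  have hlevel (υ : List Bool) := he (c, υ)
  simp only [Encodable.encode_prod_val, Encodable.encode_nat] at hlevel
  simp only [testLevel, mem_openOf, Set.mem_ofPred_eq, ← hlevel, test, Set.mem_iUnion, event,
    mem_block_iff_exists_isPrefixOf, Subtype.exists, exists_prop]
  constructor
  · rintro ⟨j, hj, υ, hυ, h⟩
    exact ⟨υ, ⟨j, hj, h⟩, hυ⟩
  · rintro ⟨υ, ⟨j, hj, h⟩, hυ⟩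
    exact ⟨j, hj, υ, hυ, h⟩

lemma exists_Kcpx_le_cost_add {R : Set (ℕ → Bool)} (hR : Pi01 R) (hpos : 0 < μCantor R) (c : ℕ) :
    ∃ d, ∀ j : Claim, j.Valid → μCantor (R ∩ event c j) = 0 →
      Kcpx (Encodable.encode j.2) ≤ j.cost + d := by
  obtain ⟨b, hb⟩ := ENNReal.exists_inv_two_pow_lt hpos.ne'
  let Accepted (j : Claim) : Prop :=
    j.Valid ∧ μCantor (R ∩ event c j) * (2 ^ (Encodable.encode j + 1 + b) : ℕ) < (1 : ℕ)
  have hevent : Pi01Family (event c) := pi01Family_block.comp (f := fun j : Claim =>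
    (Encodable.encode j, j.cost + c)) (by fun_prop)
  have hRE : REPred Accepted := rePred_and rePred_valid
    ((hR.pi01Family.inter hevent).rePred_μCantor_mul_lt (.const 1) (by fun_prop))
  have hsmall : ∑' j : {j // Accepted j}, μCantor (R ∩ event c j) < μCantor R := by
    calc ∑' j : {j // Accepted j}, μCantor (R ∩ event c j)
        ≤ ∑' j : {j // Accepted j}, (2⁻¹ : ℝ≥0∞) ^ (Encodable.encode j.1 + 1 + b) := by
          refine ENNReal.tsum_le_tsum fun j => ?_
          rw [← ENNReal.inv_pow, ENNReal.le_inv_iff_mul_le]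
          exact_mod_cast j.2.2.le
      _ ≤ 2⁻¹ ^ b := tsum_subtype_inv_two_pow_encode_add_le Accepted b
      _ < μCantor R := hb
  have hfinite := tsum_measure_lt_top_of_tsum_measure_inter_lt
    (fun j : {j // Accepted j} => (isClopen_event c j).isOpen.measurableSet)
    (iIndepSet_block (Encodable.encode_injective.comp Subtype.val_injective) _) hsmall
  simp only [event, μCantor_block] at hfinite
  obtain ⟨d, hd⟩ := exists_Kcpx_le_add hRE (w := fun j => j.cost + c)
    (x := fun j => Encodable.encode j.2) (by fun_prop) (by fun_prop) hfinite
  refine ⟨c + d, fun j hj h0 => ?_⟩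
  have := hd j ⟨hj, by simp [h0]⟩
  lia

end Claim

theorem kTrivial_of_pi01 {A : ℕ → Bool} {C : Set (ℕ → Bool)} (hC : Pi01 C) (hpos : 0 < μCantor C)
    (hrand : ∀ X ∈ C, MLRandomIn A X) : KTrivial A := by
  have htest : C ∩ ⋂ c, Claim.test A c = ∅ := by
    refine Set.eq_empty_of_forall_notMem fun X ⟨hXC, hX⟩ => ?_
    obtain ⟨c, hc⟩ := hrand X hXC _ (Claim.mlTestIn_test A)
    exact hc (Set.mem_iInter.1 hX c)
  obtain ⟨_, ⟨ζ, rfl⟩, hζ, c, hnull⟩ := exists_mem_basis_measure_inter_eq_zero hC.isClosed hpos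
    (Claim.isOpen_test A) htest
    isTopologicalBasis_range_cylinder
  obtain ⟨d, hd⟩ :=
    Claim.exists_Kcpx_le_cost_add (hC.inter (pi01Family_cylinder.pi01 ζ)) hζ c
  refine ⟨d, fun n => ?_⟩
  obtain ⟨e, σ, he, hσ, hK⟩ := exists_Kcpx_eq (Encodable.encode (List.replicate n true))
  let j : Claim := ((e, σ), strPrefix A n)
  have hj : j.Valid := by
    simpa only [Claim.Valid, j, length_strPrefix] using he.prefixFreeOutputs hσ
  have hsub : Claim.event c j ⊆ Claim.test A c :=
    Set.subset_iUnion (fun i : {j : Claim // j.Valid ∧ IsPrefixOf j.2 A} => Claim.event c i)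
      ⟨j, hj, isPrefixOf_strPrefix A n⟩
  have := hd j hj (measure_mono_null (Set.inter_subset_inter_right _ hsub) hnull)
  rwa [KofNat, hK]

/-! ### Greedy sequences computable in an oracle -/

section Greedy

variable {α : Type*}

/-- The candidates `c 0, …, c (n - 1)`, thinned out by discarding each one that is not `R`-related
to everything kept before it. The order of enumeration is preserved, so these lists grow by
appending as `n` increases. -/
def greedyList (R : α → α → Prop) [DecidableRel R] (c : ℕ → Option α) (n : ℕ) : List α :=
  (((List.range n).filterMap c).reverse.pwFilter R).reverse

variable {R : α → α → Prop} [DecidableRel R] {c : ℕ → Option α}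

lemma greedyList_succ_of_none {n : ℕ} (h : c n = none) :
    greedyList R c (n + 1) = greedyList R c n := by
  simp [greedyList, List.range_succ, h]

lemma greedyList_succ_of_pos {n : ℕ} {a : α} (h : c n = some a)
    (hR : ∀ b ∈ greedyList R c n, R a b) :
    greedyList R c (n + 1) = greedyList R c n ++ [a] := by
  simp only [greedyList, List.mem_reverse] at hR
  simp [greedyList, List.range_succ, h, List.pwFilter_cons_of_pos hR]

lemma greedyList_succ_of_neg {n : ℕ} {a : α} (h : c n = some a)
    (hR : ¬ ∀ b ∈ greedyList R c n, R a b) : greedyList R c (n + 1) = greedyList R c n := by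
  simp only [greedyList, List.mem_reverse] at hR
  simp [greedyList, List.range_succ, h, List.pwFilter_cons_of_neg hR]

lemma greedyList_prefix_succ (n : ℕ) : greedyList R c n <+: greedyList R c (n + 1) := by
  cases h : c n with
  | none => rw [greedyList_succ_of_none h]
  | some a =>
    by_cases hR : ∀ b ∈ greedyList R c n, R a b
    · exact greedyList_succ_of_pos h hR ▸ List.prefix_append _ _
    · rw [greedyList_succ_of_neg h hR]

lemma greedyList_prefix_of_le {m n : ℕ} (h : m ≤ n) : greedyList R c m <+: greedyList R c n := by
  induction n, h using Nat.le_induction with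
  | base => exact List.prefix_rfl
  | succ n _ ih => exact ih.trans (greedyList_prefix_succ n)

lemma pairwise_greedyList (n : ℕ) : (greedyList R c n).Pairwise fun a b => R b a :=
  List.pairwise_reverse.2 (List.pairwise_pwFilter _)

lemma exists_eq_some_of_mem_greedyList {n : ℕ} {a : α} (h : a ∈ greedyList R c n) :
    ∃ t, c t = some a := by
  have hmem := List.pwFilter_subset _ (List.mem_reverse.1 h)
  obtain ⟨t, -, ht⟩ := List.mem_filterMap.1 (List.mem_reverse.1 hmem)
  exact ⟨t, ht⟩

lemma exists_mem_greedyList_succ_not (hirr : ∀ a, ¬ R a a) {n : ℕ} {a : α} (h : c n = some a) :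
    ∃ b ∈ greedyList R c (n + 1), ¬ R a b := by
  by_cases hR : ∀ b ∈ greedyList R c n, R a b
  · exact ⟨a, by simp [greedyList_succ_of_pos h hR], hirr a⟩
  · push Not at hR
    obtain ⟨b, hb, hab⟩ := hR
    exact ⟨b, (greedyList_prefix_succ n).subset hb, hab⟩

lemma exists_length_greedyList_lt (hirr : ∀ a, ¬ R a a)
    (hext : ∀ n, ∃ t a, c t = some a ∧ ∀ b ∈ greedyList R c n, R a b) (n : ℕ) :
    ∃ m, (greedyList R c n).length < (greedyList R c m).length := by
  obtain ⟨t, a, hta, ha⟩ := hext n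
  obtain ⟨b, hb, hab⟩ := exists_mem_greedyList_succ_not hirr hta
  refine ⟨max n (t + 1), lt_of_le_of_ne (greedyList_prefix_of_le (le_max_left _ _)).length_le ?_⟩
  intro hlen
  have hsame := (greedyList_prefix_of_le (le_max_left n (t + 1))).eq_of_length hlen
  exact hab (ha b (hsame ▸ (greedyList_prefix_of_le (le_max_right _ _)).subset hb))

lemma exists_lt_length {G : ℕ → List α} (hG : ∀ n, ∃ m, (G n).length < (G m).length) (k : ℕ) :
    ∃ n, k < (G n).length := by
  induction k with
  | zero => exact (hG 0).imp fun _ => Nat.zero_lt_of_lt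
  | succ k ih =>
    obtain ⟨n, hn⟩ := ih
    exact (hG n).imp fun _ => (Nat.succ_le_of_lt hn).trans_lt

lemma exists_seq_getElem?_eq_some {G : ℕ → List α} (hmono : ∀ m n, m ≤ n → G m <+: G n)
    (hunb : ∀ k, ∃ n, k < (G n).length) :
    ∃ s : ℕ → α, ∀ i a, s i = a ↔ ∃ n, (G n)[i]? = some a := by
  have hlift (m n i : ℕ) (a : α) (hmn : m ≤ n) (h : (G m)[i]? = some a) : (G n)[i]? = some a := by
    obtain ⟨hi, rfl⟩ := List.getElem?_eq_some_iff.1 h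
    exact List.getElem?_eq_some_iff.2 ⟨_, ((hmono m n hmn).getElem hi).symm⟩
  choose n hn using hunb
  refine ⟨fun i => (G (n i))[i]'(hn i), fun i a => ?_⟩
  have hs : (G (n i))[i]? = some ((G (n i))[i]'(hn i)) := List.getElem?_eq_getElem (hn i)
  refine ⟨fun h => ⟨n i, h ▸ hs⟩, fun ⟨m, h⟩ => Option.some_inj.1 ?_⟩
  rw [← hlift m _ i a (le_max_left m (n i)) h, ← hlift _ _ i _ (le_max_right m (n i)) hs]

lemma greedyList_congr {d : ℕ → Option α} {n : ℕ} (h : ∀ t < n, c t = d t) :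
    greedyList R c n = greedyList R d n := by
  unfold greedyList
  rw [List.filterMap_congr fun t ht => h t (by simpa using ht)]

variable [Primcodable α]

lemma exists_primrec_strPrefix_eq_greedyList (hR : PrimrecPred fun x : α × α => R x.1 x.2)
    {f : List Bool → Option α} (hf : Primrec f) (X : ℕ → Bool) :
    ∃ g : List Bool → List α, Primrec g ∧
      ∀ n, g (strPrefix X n) = greedyList R (fun t => f (strPrefix X t)) n := by
  refine ⟨fun ξ => greedyList R (fun t => f (ξ.take t)) ξ.length, ?_, fun n => ?_⟩
  · have hcand : Primrec fun ξ : List Bool =>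
        ((List.range ξ.length).filterMap fun t => f (ξ.take t)).reverse :=
      Primrec.list_reverse.comp (by fun_prop)
    have hkeep : PrimrecPred fun x : List Bool × α × List α => ∀ b ∈ x.2.2, R x.2.1 b := by
      fun_prop
    have hstep : Primrec fun x : List Bool × α × List α =>
        if ∀ b ∈ x.2.2, R x.2.1 b then x.2.1 :: x.2.2 else x.2.2 :=
      .ite hkeep (Primrec.list_cons.comp (by fun_prop) (by fun_prop)) (by fun_prop)
    exact Primrec.list_reverse.comp (Primrec.list_foldr hcand (.const []) hstep.to₂)
  · simp only [length_strPrefix]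
    exact greedyList_congr fun t ht => by rw [take_strPrefix X ht.le]

lemma fnComputableIn_of_getElem?_eq_some {g : List Bool → List α} (hg : Primrec g)
    {X : ℕ → Bool} {s : ℕ → α} (hs : ∀ i a, s i = a ↔ ∃ n, (g (strPrefix X n))[i]? = some a) :
    FnComputableIn (fun i => Encodable.encode (s i)) X := by
  have hgraph : REIn (fun x : ℕ × ℕ => ∃ σ, IsPrefixOf σ X ∧
      ∃ a, (g σ)[x.1]? = some a ∧ Encodable.encode a = x.2) X := by
    refine reIn_exists (reIn_and (by fun_prop) (reIn_of_rePred ?_))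
    fun_prop
  obtain ⟨e, he⟩ := reIn_iff_exists_oracleComputes.1 hgraph
  refine ⟨e, fun i m => (he i m).trans ⟨?_, ?_⟩⟩
  · rintro ⟨σ, hσ, a, ha, rfl⟩
    rw [← isPrefixOf_iff_strPrefix_eq.1 hσ] at ha
    exact congrArg _ ((hs i a).2 ⟨_, ha⟩).symm
  · rintro rfl
    obtain ⟨n, hn⟩ := (hs i _).1 rfl
    exact ⟨strPrefix X n, isPrefixOf_strPrefix X n, s i, hn, rfl⟩

end Greedy

theorem REIn.exists_greedy_sequence {α : Type*} [Primcodable α] {p : α → Prop} {X : ℕ → Bool}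
    (hp : REIn p X) {R : α → α → Prop} (hR : PrimrecPred fun x : α × α => R x.1 x.2)
    (hirr : ∀ a, ¬ R a a)
    (hext : ∀ F : List α, (∀ b ∈ F, p b) → ∃ a, p a ∧ ∀ b ∈ F, R a b) :
    ∃ s : ℕ → α, FnComputableIn (fun i => Encodable.encode (s i)) X ∧
      (∀ i j, i < j → R (s j) (s i)) ∧ ∀ i, p (s i) := by
  classical
  obtain ⟨f, hf, hpf⟩ := hp.exists_enumeration
  let G := greedyList R fun t => f (strPrefix X t)
  have hGp (n b) (hb : b ∈ G n) : p b := (hpf b).2 (exists_eq_some_of_mem_greedyList hb)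
  have hGext (n) : ∃ t a, f (strPrefix X t) = some a ∧ ∀ b ∈ G n, R a b := by
    obtain ⟨a, ha, hab⟩ := hext (G n) (hGp n)
    obtain ⟨t, ht⟩ := (hpf a).1 ha
    exact ⟨t, a, ht, hab⟩
  obtain ⟨s, hs⟩ := exists_seq_getElem?_eq_some (G := G) (fun _ _ => greedyList_prefix_of_le)
    (exists_lt_length (exists_length_greedyList_lt hirr hGext))
  refine ⟨s, ?_, fun i j hij => ?_, fun i => ?_⟩
  · obtain ⟨g, hg, hgG⟩ := exists_primrec_strPrefix_eq_greedyList hR hf X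
    exact fnComputableIn_of_getElem?_eq_some hg fun i a => by simp only [hs, hgG, G]
  · obtain ⟨n, hn⟩ := (hs j _).1 rfl
    obtain ⟨hj, hn⟩ := List.getElem?_eq_some_iff.1 hn
    rw [(hs i _).2 ⟨n, List.getElem?_eq_getElem (hij.trans hj)⟩, ← hn]
    exact List.pairwise_iff_getElem.1 (pairwise_greedyList n) i j _ hj hij
  · obtain ⟨n, hn⟩ := (hs i _).1 rfl
    exact hGp n _ (List.mem_of_getElem? hn)

/-! ### Extending strings into non-random territory -/

lemma dens_mono (σ : List Bool) {P Q : Set (ℕ → Bool)} (h : P ⊆ Q) : dens σ P ≤ dens σ Q := by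
  unfold dens
  gcongr

lemma Pi01.rePred_dens_lt {P : Set (ℕ → Bool)} (hP : Pi01 P) (r : ℚ≥0) :
    REPred fun σ => dens σ P < r := by
  have h : REPred fun σ => μCantor (cylinder σ ∩ P) * (2 ^ σ.length * r.den : ℕ) < r.num :=
    (pi01Family_cylinder.inter hP.pi01Family).rePred_μCantor_mul_lt (by fun_prop) (by fun_prop)
  refine h.of_eq fun σ => ?_
  have hr : (r : ℝ≥0∞) = r.num / r.den := by
    rw [← ENNReal.coe_nnratCast, NNRat.cast_def, ENNReal.coe_div (by simp)]
    simp
  rw [hr, ENNReal.lt_div_iff_mul_lt (by simp) (by simp), dens, mul_assoc]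
  push_cast
  rfl

lemma exists_nnrat_btwn {a b : ℝ≥0∞} (h : a < b) :
    ∃ r : ℚ≥0, a < r ∧ (r : ℝ≥0∞) < b := by
  obtain ⟨q, hq, hab⟩ := ENNReal.lt_iff_exists_rat_btwn.1 h
  lift q to ℚ≥0 using hq
  have hcast : Real.toNNReal ((q : ℚ) : ℝ) = (q : NNReal) := Real.toNNReal_coe (r := q)
  exact ⟨q, by rwa [hcast] at hab⟩

lemma μCantor_inter_compl_openOf_pos {P : Set (ℕ → Bool)} {τ : List Bool} {r : ℝ≥0∞}
    (h : r < dens τ P) :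
    0 < μCantor (cylinder τ ∩ P ∩ (openOf {σ | τ <+: σ ∧ dens σ P < r})ᶜ) := by
  set S := {σ | τ <+: σ ∧ dens σ P < r}
  have hS : openOf S ⊆ cylinder τ := fun X hX => by
    obtain ⟨σ, hσ, hX⟩ := mem_openOf.1 hX
    exact IsPrefixOf.of_prefix hX hσ.1
  refine pos_iff_ne_zero.2 fun h0 => h.not_ge ?_
  calc dens τ P = μCantor (cylinder τ ∩ P) * 2 ^ τ.length := rfl
    _ ≤ μCantor (openOf S ∩ P) * 2 ^ τ.length := by
      gcongr ?_ * _
      calc μCantor (cylinder τ ∩ P) = μCantor (cylinder τ ∩ P ∩ openOf S) := by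
            rw [← measure_inter_add_sdiff _ (isOpen_openOf S).measurableSet, Set.sdiff_eq, h0,
              add_zero]
        _ ≤ μCantor (openOf S ∩ P) := measure_mono fun X hX => ⟨hX.2, hX.1.2⟩
    _ ≤ r * μCantor (openOf S) * 2 ^ τ.length := by
      gcongr
      exact μCantor_openOf_inter_le fun σ hσ => hσ.2.le
    _ ≤ r * μCantor (cylinder τ) * 2 ^ τ.length := by gcongr
    _ = r := by rw [mul_assoc, μCantor_cylinder_mul_two_pow, mul_one]

/-- Removing from `P` the strings of low density leaves a `Π⁰₁` class of positive measure, which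
cannot consist of `A`-random sequences only, as `A` would then be `K`-trivial. -/
theorem exists_not_mlRandomIn_forall_le_dens {A : ℕ → Bool} (hA : ¬ KTrivial A)
    {P : Set (ℕ → Bool)} (hP : Pi01 P) {τ : List Bool} {r : ℚ≥0}
    (h : (r : ℝ≥0∞) < dens τ P) :
    ∃ X ∈ cylinder τ ∩ P, ¬ MLRandomIn A X ∧
      ∀ σ, τ <+: σ → IsPrefixOf σ X → r ≤ dens σ P := by
  have hpi : Pi01 (openOf {σ | τ <+: σ ∧ dens σ P < r})ᶜ := by
    have := hP.rePred_dens_lt r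
    exact pi01_compl_openOf (rePred_and (rePred_of_primrecPred (by fun_prop)) this)
  by_contra! hcon
  refine hA (kTrivial_of_pi01 (((pi01Family_cylinder.pi01 τ).inter hP).inter hpi)
    (μCantor_inter_compl_openOf_pos h) fun X hX => by_contra fun hnot => ?_)
  obtain ⟨σ, hτσ, hσ, hlow⟩ := hcon X hX.1 hnot
  exact hX.2 (mem_openOf.2 ⟨σ, ⟨hτσ, hlow⟩, hσ⟩)

open Filter in
lemma IsPrefixOf.eventually_prefix_strPrefix {σ : List Bool} {X : ℕ → Bool}
    (h : IsPrefixOf σ X) : ∀ᶠ n in atTop, σ <+: strPrefix X n := by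
  filter_upwards [eventually_ge_atTop σ.length] with n hn
  exact h.prefix_of_length_le (isPrefixOf_strPrefix X n) (by rwa [length_strPrefix])

open Filter in
lemma eventually_incompRel_strPrefix {σ : List Bool} {X : ℕ → Bool} (h : ¬ IsPrefixOf σ X) :
    ∀ᶠ n in atTop, IncompRel (· <+: ·) (strPrefix X n) σ := by
  filter_upwards [eventually_ge_atTop σ.length] with n hn
  have hX := isPrefixOf_strPrefix X n
  refine ⟨fun hle => h ?_, fun hle => h (hX.of_prefix hle)⟩
  rwa [hle.eq_of_length_le (by rwa [length_strPrefix])] at hX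

lemma cylinder_inter_compl_openOf_eq_empty {S : Set (List Bool)} {ρ : List Bool}
    (h : ∃ s ∈ S, s <+: ρ) : cylinder ρ ∩ (openOf S)ᶜ = ∅ := by
  obtain ⟨s, hs, hsρ⟩ := h
  exact Set.disjoint_iff_inter_eq_empty.1 (Set.disjoint_compl_right_iff_subset.2
    fun X hX => mem_openOf.2 ⟨s, hs, IsPrefixOf.of_prefix hX hsρ⟩)

theorem exists_extension_forall_incompRel {A : ℕ → Bool} (hA : ¬ KTrivial A)
    {P : Set (ℕ → Bool)} (hP : Pi01 P) {S : Set (List Bool)}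
    (hS : ∀ X ∈ (openOf S)ᶜ, MLRandomIn A X) {τ : List Bool} {r : ℚ≥0}
    (h : (r : ℝ≥0∞) < dens τ (P ∩ (openOf S)ᶜ)) {F : List (List Bool)}
    (hF : ∀ ρ ∈ F, ∃ s ∈ S, s <+: ρ) :
    ∃ ρ, (τ <+: ρ ∧ (∃ s ∈ S, s <+: ρ) ∧ ¬ dens ρ P < r) ∧
      ∀ σ ∈ F, IncompRel (· <+: ·) ρ σ := by
  have hmem : PrimrecPred (· ∈ F) := by
    have : PrimrecPred fun σ => ∃ υ ∈ F, υ = σ := by fun_prop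
    exact this.of_eq fun σ => by simp
  have hPF : Pi01 (P ∩ (openOf {σ | σ ∈ F})ᶜ) :=
    hP.inter (pi01_compl_openOf (rePred_of_primrecPred hmem))
  have hsub : P ∩ (openOf S)ᶜ ⊆ P ∩ (openOf {σ | σ ∈ F})ᶜ := by
    refine Set.inter_subset_inter_right P (Set.compl_subset_compl.2 fun X hX => ?_)
    obtain ⟨ρ, hρ, hX⟩ := mem_openOf.1 hX
    obtain ⟨s, hs, hsρ⟩ := hF ρ hρ
    exact mem_openOf.2 ⟨s, hs, hX.of_prefix hsρ⟩
  obtain ⟨X, ⟨hτX, -, hFX⟩, hnot, hdens⟩ :=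
    exists_not_mlRandomIn_forall_le_dens hA hPF (h.trans_le (dens_mono τ hsub))
  obtain ⟨s, hs, hsX⟩ := mem_openOf.1 (Set.not_notMem.1 fun hX => hnot (hS X hX))
  have hinc : ∀ᶠ n in Filter.atTop, ∀ σ ∈ F, IncompRel (· <+: ·) (strPrefix X n) σ :=
    (Filter.eventually_all_finite F.finite_toSet).2 fun σ hσ =>
      eventually_incompRel_strPrefix fun hσX => hFX (mem_openOf.2 ⟨σ, hσ, hσX⟩)
  obtain ⟨n, hτn, hsn, hFn⟩ := (hτX.eventually_prefix_strPrefix.and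
    (hsX.eventually_prefix_strPrefix.and hinc)).exists
  have hn := hdens _ hτn (isPrefixOf_strPrefix X n)
  exact ⟨strPrefix X n, ⟨hτn, ⟨s, hs, hsn⟩,
    (hn.trans (dens_mono _ Set.inter_subset_left)).not_gt⟩, hFn⟩

theorem stmt15_general (A : ℕ → Bool) (hA : ¬ KTrivial A)
    (P Q : Set (ℕ → Bool)) (hP : Pi01 P)
    (hQ : Pi01In A Q) (hQrand : ∀ X ∈ Q, MLRandomIn A X)
    (τ : List Bool) (ε : ℝ≥0∞) (hε : ε < dens τ (P ∩ Q)) :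
    ∃ ρ : ℕ → List Bool,
      FnComputableIn (fun i => Encodable.encode (ρ i)) (joinSet A zeroJump) ∧
      (∀ i j, i ≠ j → ¬ ρ i <+: ρ j) ∧
      ∀ i, τ <+: ρ i ∧ cylinder (ρ i) ∩ Q = ∅ ∧ ε < dens (ρ i) P := by
  obtain ⟨S, hS, rfl⟩ := hQ
  obtain ⟨r, hεr, hr⟩ := exists_nnrat_btwn hε
  have htarget : REIn (fun ρ => τ <+: ρ ∧ (∃ s, s ∈ S ∧ s <+: ρ) ∧
      ¬ dens ρ P < r) (joinSet A zeroJump) := by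
    have hSA := (ceStrIn_iff_reIn.1 hS).joinSet_left zeroJump
    have hlow := (reIn_zeroJump_not (hP.rePred_dens_lt r)).joinSet_right A
    refine reIn_and (reIn_of_primrecPred (by fun_prop)) (reIn_and (reIn_exists ?_) hlow)
    exact reIn_and (reIn_comp hSA .snd) (reIn_of_primrecPred (by fun_prop))
  obtain ⟨ρ, hcomp, hinc, hρ⟩ := htarget.exists_greedy_sequence
    (R := IncompRel (· <+: ·)) (.and (by fun_prop) (by fun_prop)) (fun σ h => h.1 List.prefix_rfl)
    fun F hF => exists_extension_forall_incompRel hA hP hQrand hr fun σ hσ => (hF σ hσ).2.1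
  refine ⟨ρ, hcomp, fun i j hij => ?_, fun i => ?_⟩
  · exact hij.lt_or_gt.elim (fun h => (hinc i j h).2) fun h => (hinc j i h).1
  · obtain ⟨hτ, hs, hd⟩ := hρ i
    exact ⟨hτ, cylinder_inter_compl_openOf_eq_empty hs, hεr.trans_le (not_lt.1 hd)⟩

/-- Lemma 9 of Day–Miller: an `(A ⊕ ∅′)`-computable prefix-free
sequence of extensions of `τ`, each out of `Q` and keeping half the density. -/
theorem stmt15 (A : ℕ → Bool) (hA : ¬ KTrivial A)
    (P Q : Set (ℕ → Bool)) (hP : Pi01 P)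
    (hQ : Pi01In A Q) (hQrand : ∀ X ∈ Q, MLRandomIn A X)
    (τ : List Bool) (δ : ℝ≥0∞) (hδ : 0 < δ) (hd : δ ≤ dens τ (P ∩ Q)) :
    ∃ ρ : ℕ → List Bool,
      FnComputableIn (fun i => Encodable.encode (ρ i)) (joinSet A zeroJump) ∧
      (∀ i j, i ≠ j → ¬ ρ i <+: ρ j) ∧
      ∀ i, τ <+: ρ i ∧ cylinder (ρ i) ∩ Q = ∅ ∧ δ / 2 ≤ dens (ρ i) P := by
  have hhalf : δ / 2 < δ := ENNReal.half_lt_self hδ.ne' (ne_top_of_le_ne_top (dens_ne_top τ _) hd)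
  exact (stmt15_general A hA P Q hP hQ hQrand τ (δ / 2) (hhalf.trans_le hd)).imp
    fun _ => .imp_right (.imp_right fun h i => (h i).imp_right (.imp_right le_of_lt))
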